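/- arXiv:1611.07692 — 3 statements merged into one kernel-verified Lean document; each statement's English description precedes it below -/
import Mathlib

section
/- (Stein–Weiss identity, used as a hypothesis/known result) For any measurable set E ⊂ ℝ of finite Lebesgue measure and any λ > 0, the Lebesgue measure of {x ∈ ℝ : |H𝟙_E(x)| > λ} equals 4 e^{πλ} |E| / (e^{2πλ} - 1). -/
open MeasureTheory Filter Set Real

/-- Poisson representation at `i y` for bounded holomorphic functions. -/
lemma poisson_core (F : ℂ → ℂ) (δ : ℝ) (hδ : 0 < δ)
    (hd : DifferentiableOn ℂ F {z | -δ < z.im}) (C : ℝ)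
    (hb : ∀ z : ℂ, -δ < z.im → ‖F z‖ ≤ C) (y : ℝ) (hy : 0 < y) :
    ∫ t : ℝ, (F t - F (y * Complex.I)) * ((t ^ 2 + y ^ 2 : ℝ) : ℂ)⁻¹ = 0 := by
  set p : ℂ := y * Complex.I with hp
  have hpim : p.im = y := by simp [hp]
  have hpre : p.re = 0 := by simp [hp]
  have hC : 0 ≤ C := (norm_nonneg _).trans (hb p (by rw [hpim]; linarith))
  have hopen : IsOpen {z : ℂ | -δ < z.im} := isOpen_lt continuous_const Complex.continuous_im
  have hds : DifferentiableOn ℂ (dslope F p) {z | -δ < z.im} :=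
    (Complex.differentiableOn_dslope (hopen.mem_nhds (by
      simp only [mem_ofPred_eq, hpim]; linarith))).2 hd
  set Ψ : ℂ → ℂ := fun z => dslope F p z * (z + p)⁻¹ with hΨ
  have hΨd : DifferentiableOn ℂ Ψ {z | 0 ≤ z.im} := by
    apply DifferentiableOn.mul
    · exact hds.mono fun z hz => by simp only [mem_ofPred_eq] at hz ⊢; linarith
    · apply DifferentiableOn.inv (by fun_prop)
      intro z hz h0
      have := congrArg Complex.im h0
      simp [hpim] at this
      simp only [mem_ofPred_eq] at hz
      linarith
  have hΨr : ∀ t : ℝ, Ψ t = (F t - F p) * ((t ^ 2 + y ^ 2 : ℝ) : ℂ)⁻¹ := by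
    intro t
    have htp : (t : ℂ) ≠ p := by
      intro h0
      have := congrArg Complex.im h0
      simp [hpim] at this
      linarith
    simp only [hΨ]
    rw [dslope_of_ne _ htp, slope_def_field]
    have : ((t ^ 2 + y ^ 2 : ℝ) : ℂ) = (t - p) * (t + p) := by
      rw [hp]; push_cast; ring_nf; simp
    rw [this, mul_inv]; ring
  have hΨb : ∀ R : ℝ, 2 * y ≤ R → ∀ z : ℂ, 0 ≤ z.im → R ≤ ‖z‖ → ‖Ψ z‖ ≤ 8 * C / R ^ 2 := by
    intro R hR z hz hzR
    have hpn : ‖p‖ = y := by simp [hp, abs_of_pos hy]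
    have hRpos : 0 < R := by linarith
    have h1 : R / 2 ≤ ‖z - p‖ := by
      have := norm_sub_norm_le z p; rw [hpn] at this; linarith
    have h2 : R / 2 ≤ ‖z + p‖ := by
      have := norm_sub_norm_le z (-p); rw [norm_neg, hpn, sub_neg_eq_add] at this; linarith
    have hzp : z ≠ p := by
      rintro rfl
      simp at h1; linarith
    simp only [hΨ]
    rw [dslope_of_ne _ hzp, slope_def_field, norm_mul, norm_div, norm_inv]
    have h3 : ‖F z - F p‖ ≤ 2 * C := by
      have := norm_sub_le (F z) (F p)
      have := hb z (by linarith)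
      have := hb p (by rw [hpim]; linarith)
      linarith
    calc ‖F z - F p‖ / ‖z - p‖ * ‖z + p‖⁻¹ ≤ (2 * C) / (R / 2) * (R / 2)⁻¹ := by gcongr
      _ = 8 * C / R ^ 2 := by field_simp; ring
  have hrect : ∀ R : ℝ, 2 * y ≤ R → ‖∫ t in (-R)..R, Ψ t‖ ≤ 32 * C / R := by
    intro R hR
    have hRpos : 0 < R := by linarith
    have key := Complex.integral_boundary_rect_eq_zero_of_differentiableOn Ψ (-R : ℝ)
      ((R : ℝ) + (R : ℝ) * Complex.I) (hΨd.mono (by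
        intro z hz
        have := hz.2
        simp [uIcc_of_le hRpos.le] at this
        exact this.1))
    simp only [Complex.ofReal_re, Complex.ofReal_im, Complex.add_re, Complex.mul_re, Complex.I_re,
      mul_zero, Complex.I_im, zero_mul, sub_zero, add_zero, Complex.add_im, Complex.mul_im,
      mul_one, zero_add, Complex.ofReal_zero] at key
    have e1 : ‖∫ x in (-R)..R, Ψ (x + R * Complex.I)‖ ≤ 8 * C / R ^ 2 * |R - -R| := by
      apply intervalIntegral.norm_integral_le_of_norm_le_const
      intro x _
      apply hΨb R hR _ (by simp [hRpos.le])
      refine le_trans ?_ (Complex.abs_im_le_norm _)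
      simp [le_abs_self]
    have e2 : ‖∫ x in (0:ℝ)..R, Ψ (R + x * Complex.I)‖ ≤ 8 * C / R ^ 2 * |R - 0| := by
      apply intervalIntegral.norm_integral_le_of_norm_le_const
      intro x hx
      rw [uIoc_of_le hRpos.le] at hx
      apply hΨb R hR _ (by simp [hx.1.le])
      refine le_trans ?_ (Complex.abs_re_le_norm _)
      simp [le_abs_self]
    have e3 : ‖∫ x in (0:ℝ)..R, Ψ ((-R : ℝ) + x * Complex.I)‖ ≤ 8 * C / R ^ 2 * |R - 0| := by
      apply intervalIntegral.norm_integral_le_of_norm_le_const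
      intro x hx
      rw [uIoc_of_le hRpos.le] at hx
      apply hΨb R hR _ (by simp [hx.1.le])
      refine le_trans ?_ (Complex.abs_re_le_norm _)
      simp [le_abs_self]
    have e4 : ∫ t in (-R)..R, Ψ t = (∫ x in (-R)..R, Ψ (x + R * Complex.I))
       - Complex.I • (∫ x in (0:ℝ)..R, Ψ (R + x * Complex.I))
       + Complex.I • (∫ x in (0:ℝ)..R, Ψ ((-R : ℝ) + x * Complex.I)) := by
      linear_combination key
    rw [e4]
    refine (norm_add_le _ _).trans ?_
    refine (add_le_add_left (norm_sub_le _ _) _).trans ?_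
    rw [norm_smul, norm_smul, Complex.norm_I, one_mul, one_mul]
    have a1 : |R - -R| = 2 * R := by rw [abs_of_pos] <;> linarith
    have a2 : |R - 0| = R := by rw [abs_of_pos] <;> linarith
    rw [a1] at e1
    rw [a2] at e2 e3
    have : 32 * C / R = 8 * C / R ^ 2 * (2 * R) + 8 * C / R ^ 2 * R + 8 * C / R ^ 2 * R := by
      field_simp; ring
    rw [this]; gcongr
  have hint : Integrable (fun t : ℝ => Ψ t) := by
    have h1 : Integrable (fun t : ℝ => 2 * C * (t ^ 2 + y ^ 2)⁻¹) := by
      apply Integrable.const_mul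
      have := (integrable_inv_one_add_sq.comp_div hy.ne').const_mul ((y ^ 2)⁻¹)
      refine this.congr (Eventually.of_forall fun t => ?_)
      simp only
      rw [← mul_inv]; congr 1; field_simp; ring
    refine h1.mono' ?_ (Eventually.of_forall fun t => ?_)
    · apply Continuous.aestronglyMeasurable
      refine hΨd.continuousOn.comp_continuous Complex.continuous_ofReal fun t => ?_
      simp
    · rw [hΨr, norm_mul, norm_inv, Complex.norm_real, Real.norm_of_nonneg (by positivity)]
      gcongr
      have := norm_sub_le (F t) (F p)
      have := hb t (by simp [hδ])
      have := hb p (by rw [hpim]; linarith)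
      linarith
  simp_rw [← hΨr]
  have hlim := intervalIntegral_tendsto_integral hint tendsto_neg_atTop_atBot tendsto_id
  refine tendsto_nhds_unique hlim ?_
  apply squeeze_zero_norm' (a := fun R => 32 * C / R)
  · filter_upwards [eventually_ge_atTop (2 * y)] with R hR using hrect R hR
  · exact tendsto_const_nhds.div_atTop tendsto_id

lemma poisson_cauchy (F : ℂ → ℂ) (δ : ℝ) (hδ : 0 < δ)
    (hd : DifferentiableOn ℂ F {z | -δ < z.im}) (C : ℝ)
    (hb : ∀ z : ℂ, -δ < z.im → ‖F z‖ ≤ C) (a : ℝ) (γ : NNReal) (hγ : γ ≠ 0) :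
    ∫ t : ℝ, F t ∂(ProbabilityTheory.cauchyMeasure a γ) = F (a + γ * Complex.I) := by
  have hγ' : (0:ℝ) < γ := by positivity
  have key := poisson_core (fun z => F (z + a)) δ hδ
    (hd.comp (by fun_prop) (by intro z hz; simpa using hz)) C
    (fun z hz => hb _ (by simpa using hz)) γ hγ'
  have key2 : ∫ t : ℝ, (F t - F (a + γ * Complex.I)) * (((t - a) ^ 2 + γ ^ 2 : ℝ) : ℂ)⁻¹ = 0 := by
    rw [← integral_add_right_eq_self _ a, ← key]
    congr 1; ext t
    simp only [Complex.ofReal_add, add_sub_cancel_right]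
    rw [add_comm (a:ℂ)]
  have hprob : IsProbabilityMeasure (ProbabilityTheory.cauchyMeasure a γ) := inferInstance
  have hint : Integrable (fun t : ℝ => F t) (ProbabilityTheory.cauchyMeasure a γ) := by
    refine Integrable.of_bound (C := C) ?_ (Eventually.of_forall fun t => hb _ (by simp [hδ]))
    apply Continuous.aestronglyMeasurable
    exact hd.continuousOn.comp_continuous Complex.continuous_ofReal fun t => by simp [hδ]
  have : ∫ t : ℝ, (F t - F (a + γ * Complex.I)) ∂(ProbabilityTheory.cauchyMeasure a γ) = 0 := by
    rw [ProbabilityTheory.cauchyMeasure_of_scale_ne_zero a hγ,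
      integral_withDensity_eq_integral_toReal_smul
        (ProbabilityTheory.measurable_cauchyPDF a γ)
        (Eventually.of_forall fun t => by simp [ProbabilityTheory.cauchyPDF])]
    rw [← mul_zero ((π⁻¹ * γ : ℝ) : ℂ), ← key2, ← integral_const_mul]
    congr 1; ext t
    rw [ProbabilityTheory.cauchyPDF_def, ENNReal.toReal_ofReal
      (ProbabilityTheory.cauchyPDF_pos a hγ t).le, ProbabilityTheory.cauchyPDFReal_def,
      Complex.real_smul]
    push_cast
    ring
  rw [integral_sub hint (integrable_const _)] at this
  simpa [sub_eq_zero] using this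

lemma charFun_cauchy (a : ℝ) (γ : NNReal) (hγ : γ ≠ 0) (ξ : ℝ) (hξ : 0 ≤ ξ) :
    charFun (ProbabilityTheory.cauchyMeasure a γ) ξ
      = Complex.exp (ξ * (a + γ * Complex.I) * Complex.I) := by
  rw [charFun_apply_real]
  refine poisson_cauchy (fun z => Complex.exp (ξ * z * Complex.I)) 1 one_pos (by fun_prop)
    (Real.exp ξ) ?_ a γ hγ
  intro z hz
  rw [Complex.norm_exp]
  apply Real.exp_le_exp.2
  simp
  nlinarith

lemma charFun_ext_nonneg (μ ν : Measure ℝ) [IsFiniteMeasure μ] [IsFiniteMeasure ν]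
    (h : ∀ ξ : ℝ, 0 ≤ ξ → charFun μ ξ = charFun ν ξ) : μ = ν := by
  apply Measure.ext_of_charFun
  ext ξ
  rcases le_total 0 ξ with h0 | h0
  · exact h ξ h0
  · have := h (-ξ) (by linarith)
    rw [charFun_neg, charFun_neg] at this
    exact (starRingEnd ℂ).injective this

lemma map_cauchy (Φ : ℂ → ℂ) (hd : DifferentiableOn ℂ Φ {z | 0 < z.im})
    (him : ∀ z : ℂ, 0 < z.im → 0 ≤ (Φ z).im) (φ : ℝ → ℝ) (hφ : AEMeasurable φ)
    (hlim : ∀ᵐ x : ℝ, Tendsto (fun δ : ℝ => Φ (x + δ * Complex.I)) (nhdsWithin 0 (Ioi 0))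
      (nhds (φ x))) (y : NNReal) (hy : y ≠ 0) (b : NNReal) (hb : b ≠ 0)
    (hb' : (Φ (y * Complex.I)).im = b) :
    (ProbabilityTheory.cauchyMeasure 0 y).map φ
      = ProbabilityTheory.cauchyMeasure (Φ (y * Complex.I)).re b := by
  have hy' : (0:ℝ) < y := by positivity
  have hac : ProbabilityTheory.cauchyMeasure 0 y ≪ volume := by
    rw [ProbabilityTheory.cauchyMeasure_of_scale_ne_zero 0 hy]
    exact withDensity_absolutelyContinuous _ _
  have hφ' : AEMeasurable φ (ProbabilityTheory.cauchyMeasure 0 y) := hφ.mono_ac hac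
  have := Measure.isProbabilityMeasure_map hφ'
  apply charFun_ext_nonneg
  intro ξ hξ
  rw [charFun_cauchy _ _ hb _ hξ, charFun_apply_real, integral_map hφ' (by fun_prop)]
  have hopen : IsOpen {z : ℂ | 0 < z.im} := isOpen_lt continuous_const Complex.continuous_im
  have hre : ((Φ (y * Complex.I)).re : ℂ) + b * Complex.I = Φ (y * Complex.I) := by
    have : ((b : ℝ) : ℂ) = ((Φ (y * Complex.I)).im : ℂ) := by rw [hb']
    have h2 := Complex.re_add_im (Φ (y * Complex.I))
    rw [← this] at h2
    exact h2
  rw [hre]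
  -- integrals at height δ
  have hδ : ∀ δ : ℝ, 0 < δ → ∫ t : ℝ, Complex.exp (ξ * Φ (t + δ * Complex.I) * Complex.I)
      ∂(ProbabilityTheory.cauchyMeasure 0 y)
      = Complex.exp (ξ * Φ (y * Complex.I + δ * Complex.I) * Complex.I) := by
    intro δ hδ
    have := poisson_cauchy (fun z => Complex.exp (ξ * Φ (z + δ * Complex.I) * Complex.I)) δ hδ
      (by
        have : DifferentiableOn ℂ (fun z => Φ (z + δ * Complex.I)) {z | -δ < z.im} :=
          hd.comp (by fun_prop) (by
            intro z hz; simp only [mem_ofPred_eq] at hz ⊢; simp; linarith)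
        exact ((this.const_mul _).mul_const _).cexp) 1 (by
        intro z hz
        have h1 := him (z + δ * Complex.I) (by simp; linarith)
        rw [Complex.norm_exp]
        apply Real.exp_le_one_iff.2
        simp
        positivity) 0 y hy
    simpa using this
  have l1 : Tendsto (fun δ : ℝ => ∫ t : ℝ, Complex.exp (ξ * Φ (t + δ * Complex.I) * Complex.I)
      ∂(ProbabilityTheory.cauchyMeasure 0 y)) (nhdsWithin 0 (Ioi 0))
      (nhds (∫ t : ℝ, Complex.exp (ξ * φ t * Complex.I)
      ∂(ProbabilityTheory.cauchyMeasure 0 y))) := by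
    apply tendsto_integral_filter_of_dominated_convergence (fun _ => (1:ℝ))
    · filter_upwards [self_mem_nhdsWithin] with δ hδ
      have hδ : 0 < δ := hδ
      apply Continuous.aestronglyMeasurable
      have : Continuous fun t : ℝ => Φ (t + δ * Complex.I) :=
        hd.continuousOn.comp_continuous (by fun_prop) (by intro t; simp [hδ])
      exact Complex.continuous_exp.comp ((continuous_const.mul this).mul continuous_const)
    · filter_upwards [self_mem_nhdsWithin] with δ hδ
      have hδ : 0 < δ := hδ
      refine Eventually.of_forall fun t => ?_
      have h1 := him (t + δ * Complex.I) (by simp [hδ])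
      rw [Complex.norm_exp]
      apply Real.exp_le_one_iff.2
      simp
      positivity
    · exact integrable_const _
    · filter_upwards [hac.ae_le hlim] with t ht
      exact ((Complex.continuous_exp.tendsto _).comp ((ht.const_mul _).mul_const _))
  have l2 : Tendsto (fun δ : ℝ => Complex.exp (ξ * Φ (y * Complex.I + δ * Complex.I) * Complex.I))
      (nhdsWithin 0 (Ioi 0)) (nhds (Complex.exp (ξ * Φ (y * Complex.I) * Complex.I))) := by
    have hc : ContinuousAt Φ (y * Complex.I) :=
      (hd.differentiableAt (hopen.mem_nhds (by simp; exact hy'))).continuousAt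
    have h0 : Tendsto (fun δ : ℝ => (y * Complex.I + δ * Complex.I : ℂ)) (nhdsWithin 0 (Ioi 0))
        (nhds (y * Complex.I)) := by
      have : Continuous (fun δ : ℝ => (y * Complex.I + δ * Complex.I : ℂ)) := by fun_prop
      have := (this.tendsto 0).mono_left (nhdsWithin_le_nhds (s := Ioi 0))
      simpa using this
    exact ((Complex.continuous_exp.tendsto _).comp (((hc.tendsto.comp h0).const_mul _).mul_const _))
  refine tendsto_nhds_unique l1 (l2.congr' ?_)
  filter_upwards [self_mem_nhdsWithin] with δ h
  exact (hδ δ h).symm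

lemma lintegral_kernel (x δ : ℝ) (hδ : 0 < δ) :
    ∫⁻ t : ℝ, ENNReal.ofReal (δ / ((x - t) ^ 2 + δ ^ 2)) = ENNReal.ofReal π := by
  lift δ to NNReal using hδ.le
  have h := ProbabilityTheory.lintegral_cauchyPDF_eq_one x (γ := δ)
    (by rintro rfl; simp at hδ)
  have : ∀ t : ℝ, ENNReal.ofReal (δ / ((x - t) ^ 2 + δ ^ 2))
      = ENNReal.ofReal π * ProbabilityTheory.cauchyPDF x δ t := by
    intro t
    rw [ProbabilityTheory.cauchyPDF_def, ← ENNReal.ofReal_mul pi_pos.le,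
      ProbabilityTheory.cauchyPDFReal_def]
    congr 1
    have : (t - x) ^ 2 = (x - t) ^ 2 := by ring
    rw [this]
    field_simp
  simp_rw [this]
  rw [lintegral_const_mul _ (ProbabilityTheory.measurable_cauchyPDF _ _), h, mul_one]

lemma approx_identity (x : ℝ) (μ : Measure ℝ) (hμ : μ ≤ volume)
    (hL : Tendsto (fun r => μ (Metric.closedBall x r) / volume (Metric.closedBall x r))
      (nhdsWithin 0 (Ioi 0)) (nhds 0)) :
    Tendsto (fun δ : ℝ => ∫⁻ t : ℝ, ENNReal.ofReal (δ / ((x - t) ^ 2 + δ ^ 2)) ∂μ)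
      (nhdsWithin 0 (Ioi 0)) (nhds 0) := by
  have hmeas : ∀ δ : ℝ, Measurable (fun t : ℝ => δ / ((x - t) ^ 2 + δ ^ 2)) := by
    intro δ; fun_prop
  -- the near estimate
  have near : ∀ ε : ENNReal, 0 < ε → ∃ η : ℝ, 0 < η ∧ ∀ δ : ℝ, 0 < δ →
      ∫⁻ t in Metric.closedBall x η, ENNReal.ofReal (δ / ((x - t) ^ 2 + δ ^ 2)) ∂μ
        ≤ ε * ENNReal.ofReal π := by
    intro ε hε
    have h1 := (ENNReal.tendsto_nhds_zero.1 hL) ε hε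
    obtain ⟨η, hη, hη'⟩ := mem_nhdsGT_iff_exists_Ioc_subset.1 h1
    have hη : 0 < η := hη
    refine ⟨η, hη, fun δ hδ => ?_⟩
    have ball : ∀ r : ℝ, r ≤ η → μ (Metric.closedBall x r) ≤ ε * volume (Metric.closedBall x r) := by
      intro r hr
      rcases lt_or_ge 0 r with h0 | h0
      · have := hη' ⟨h0, hr⟩
        simp only [mem_ofPred_eq] at this
        exact (ENNReal.div_le_iff (by simp [h0]) (by
          rw [Real.volume_closedBall]; exact ENNReal.ofReal_ne_top)).1 this
      · calc μ (Metric.closedBall x r) ≤ volume (Metric.closedBall x r) := hμ _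
          _ = 0 := by simp [h0]
          _ ≤ _ := zero_le
    rw [lintegral_eq_lintegral_meas_le _ (Eventually.of_forall fun t => by positivity)
      (hmeas δ).aemeasurable]
    calc _ ≤ ∫⁻ τ in Ioi (0:ℝ), ε * volume {a : ℝ | τ ≤ δ / ((x - a) ^ 2 + δ ^ 2)} := by
          apply setLIntegral_mono' measurableSet_Ioi
          intro τ hτ
          have hτ : 0 < τ := hτ
          rw [Measure.restrict_apply (measurableSet_le measurable_const (hmeas δ))]
          have hiff : ∀ a : ℝ, τ ≤ δ / ((x - a) ^ 2 + δ ^ 2) ↔ (a - x) ^ 2 ≤ δ / τ - δ ^ 2 := by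
            intro a
            rw [le_div_iff₀ (by positivity), le_sub_iff_add_le, le_div_iff₀ hτ]
            constructor <;> intro h <;> nlinarith
          rcases lt_or_ge (δ / τ - δ ^ 2) 0 with h0 | h0
          · have : {a : ℝ | τ ≤ δ / ((x - a) ^ 2 + δ ^ 2)} = ∅ := by
              ext a
              simp only [mem_ofPred_eq, hiff, mem_empty_iff_false, iff_false]
              nlinarith [sq_nonneg (a - x)]
            rw [this]; simp
          · have : {a : ℝ | τ ≤ δ / ((x - a) ^ 2 + δ ^ 2)}
                = Metric.closedBall x (√(δ / τ - δ ^ 2)) := by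
              ext a
              simp only [mem_ofPred_eq, hiff, Metric.mem_closedBall, Real.dist_eq]
              exact Real.sq_le h0 |>.trans abs_le.symm
            rw [this]
            have h2 : Metric.closedBall x (√(δ / τ - δ ^ 2)) ∩ Metric.closedBall x η
                = Metric.closedBall x (min (√(δ / τ - δ ^ 2)) η) := by
              ext a; simp
            rw [h2]
            refine (ball _ (min_le_right _ _)).trans ?_
            gcongr
            exact min_le_left _ _
      _ = ε * ∫⁻ τ in Ioi (0:ℝ), volume {a : ℝ | τ ≤ δ / ((x - a) ^ 2 + δ ^ 2)} := by
          apply lintegral_const_mul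
          exact Antitone.measurable fun s t hst => measure_mono fun _ h => le_trans hst h
      _ = ε * ENNReal.ofReal π := by
          rw [← lintegral_eq_lintegral_meas_le _ (Eventually.of_forall fun t => by positivity)
            (hmeas δ).aemeasurable, lintegral_kernel x δ hδ]
  -- the far estimate
  have far : ∀ η : ℝ, 0 < η → ∀ δ : ℝ, 0 < δ →
      ∫⁻ t in (Metric.closedBall x η)ᶜ, ENNReal.ofReal (δ / ((x - t) ^ 2 + δ ^ 2)) ∂μ
        ≤ ENNReal.ofReal (δ * ((1 + η ^ 2) / η ^ 2)) * ENNReal.ofReal π := by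
    intro η hη δ hδ
    rw [← lintegral_kernel x 1 one_pos, ← lintegral_const_mul _ (by fun_prop)]
    calc _ ≤ ∫⁻ t in (Metric.closedBall x η)ᶜ,
          ENNReal.ofReal (δ * ((1 + η ^ 2) / η ^ 2)) *
            ENNReal.ofReal (1 / ((x - t) ^ 2 + 1 ^ 2)) ∂μ := by
          apply setLIntegral_mono' Metric.isClosed_closedBall.measurableSet.compl
          intro t ht
          rw [← ENNReal.ofReal_mul (by positivity)]
          apply ENNReal.ofReal_le_ofReal
          simp only [mem_compl_iff, Metric.mem_closedBall, Real.dist_eq, not_le] at ht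
          have h2 : η ^ 2 ≤ (x - t) ^ 2 := by
            rw [← sq_abs (x - t), abs_sub_comm]
            gcongr
          have h3 : 0 < (x - t) ^ 2 := lt_of_lt_of_le (by positivity) h2
          rw [div_le_iff₀ (by positivity)]
          have : δ * ((1 + η ^ 2) / η ^ 2) * (1 / ((x - t) ^ 2 + 1 ^ 2)) * ((x - t) ^ 2 + δ ^ 2)
            = δ * (((1 + η ^ 2) * ((x - t) ^ 2 + δ ^ 2)) / (η ^ 2 * ((x - t) ^ 2 + 1))) := by
            field_simp
          rw [this]
          apply le_mul_of_one_le_right hδ.le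
          rw [one_le_div (by positivity)]
          nlinarith [sq_nonneg δ, sq_nonneg η, mul_nonneg (sq_nonneg δ) (sq_nonneg η)]
      _ ≤ _ := (setLIntegral_le_lintegral _ _).trans (lintegral_mono' hμ le_rfl)
  rw [ENNReal.tendsto_nhds_zero]
  intro ε hε
  have hpi : ENNReal.ofReal π ≠ 0 := by simp [pi_pos]
  obtain ⟨η, hη, hn⟩ := near (ε / 2 / ENNReal.ofReal π)
    (ENNReal.div_pos (ENNReal.div_pos hε.ne' (by simp)).ne' (by simp))
  have hlim : Tendsto (fun δ : ℝ => ENNReal.ofReal (δ * ((1 + η ^ 2) / η ^ 2)) * ENNReal.ofReal π)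
      (nhdsWithin 0 (Ioi 0)) (nhds 0) := by
    have h1 : Continuous (fun δ : ℝ => ENNReal.ofReal (δ * ((1 + η ^ 2) / η ^ 2) * π)) := by
      exact ENNReal.continuous_ofReal.comp (by fun_prop)
    have h2 := (h1.tendsto 0).mono_left (nhdsWithin_le_nhds (s := Ioi 0))
    simp only [zero_mul, ENNReal.ofReal_zero] at h2
    refine h2.congr fun δ => ?_
    rw [ENNReal.ofReal_mul' pi_pos.le]
  have hev := (ENNReal.tendsto_nhds_zero.1 hlim) (ε / 2) (ENNReal.div_pos hε.ne' (by simp))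
  filter_upwards [hev, self_mem_nhdsWithin] with δ h1 hδ
  rw [← lintegral_add_compl _ (Metric.isClosed_closedBall (x := x) (ε := η)).measurableSet]
  calc _ ≤ ε / 2 / ENNReal.ofReal π * ENNReal.ofReal π + ε / 2 :=
        add_le_add (hn δ hδ) ((far η hη δ hδ).trans h1)
    _ = ε := by rw [ENNReal.div_mul_cancel hpi (by simp), ENNReal.add_halves]

lemma ae_kernel (E : Set ℝ) (hE : MeasurableSet E) :
    ∀ᵐ x : ℝ, Tendsto (fun δ : ℝ => ∫⁻ t : ℝ, ENNReal.ofReal (δ / ((x - t) ^ 2 + δ ^ 2)) *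
      ‖E.indicator (1 : ℝ → ℝ) t - E.indicator (1 : ℝ → ℝ) x‖ₑ)
      (nhdsWithin 0 (Ioi 0)) (nhds 0) := by
  have hf : LocallyIntegrable (E.indicator (1 : ℝ → ℝ)) volume := by
    have : LocallyIntegrable (1 : ℝ → ℝ) volume := locallyIntegrable_const 1
    exact this.indicator hE
  have hm : Measurable (E.indicator (1 : ℝ → ℝ)) := measurable_one.indicator hE
  filter_upwards [(Besicovitch.vitaliFamily volume).ae_tendsto_lintegral_enorm_sub_div hf]
    with x hx
  have h1 := hx.comp (Besicovitch.tendsto_filterAt volume x)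
  have hmd : Measurable fun t => ‖E.indicator (1 : ℝ → ℝ) t - E.indicator (1 : ℝ → ℝ) x‖ₑ := by
    fun_prop
  have h2 := approx_identity x
    (volume.withDensity fun t => ‖E.indicator (1 : ℝ → ℝ) t - E.indicator (1 : ℝ → ℝ) x‖ₑ) (by
      calc _ ≤ volume.withDensity 1 := by
            apply withDensity_mono
            refine Eventually.of_forall fun t => ?_
            simp only [Pi.one_apply]
            by_cases h : t ∈ E <;> by_cases h' : x ∈ E <;> simp [h, h']
        _ = volume := withDensity_one) (by
      refine h1.congr fun r => ?_
      simp only [Function.comp]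
      rw [withDensity_apply _ Metric.isClosed_closedBall.measurableSet])
  refine h2.congr fun δ => ?_
  rw [lintegral_withDensity_eq_lintegral_mul _ hmd (by fun_prop)]
  simp [mul_comm]

lemma kernel_lim (f : ℝ → ℝ) (x : ℝ) 
    (h : Tendsto (fun δ : ℝ => ∫⁻ t : ℝ, ENNReal.ofReal (δ / ((x - t) ^ 2 + δ ^ 2)) *
      ‖f t - f x‖ₑ) (nhdsWithin 0 (Ioi 0)) (nhds 0))
    (k : ℝ → ℝ → ℝ) (hk : ∀ δ u : ℝ, 0 < δ → |k δ u| ≤ δ / (u ^ 2 + δ ^ 2)) :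
    Tendsto (fun δ => ∫ t, k δ (x - t) * (f t - f x)) (nhdsWithin 0 (Ioi 0)) (nhds 0) := by
  rw [tendsto_zero_iff_enorm_tendsto_zero]
  refine tendsto_of_tendsto_of_tendsto_of_le_of_le' tendsto_const_nhds h
    (Eventually.of_forall fun _ => zero_le) ?_
  filter_upwards [self_mem_nhdsWithin] with δ hδ
  refine (enorm_integral_le_lintegral_enorm _).trans (lintegral_mono fun t => ?_)
  rw [enorm_mul]
  gcongr
  rw [Real.enorm_eq_ofReal_abs]
  exact ENNReal.ofReal_le_ofReal (hk _ _ hδ)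

lemma integrable_kernel (x δ : ℝ) (hδ : 0 < δ) :
    Integrable (fun t : ℝ => δ / ((x - t) ^ 2 + δ ^ 2)) := by
  refine ⟨Measurable.aestronglyMeasurable (by fun_prop), ?_⟩
  rw [hasFiniteIntegral_iff_ofReal (Eventually.of_forall fun t => by positivity),
    lintegral_kernel x δ hδ]
  exact ENNReal.ofReal_lt_top

lemma integral_kernel (x δ : ℝ) (hδ : 0 < δ) :
    ∫ t : ℝ, δ / ((x - t) ^ 2 + δ ^ 2) = π := by
  rw [integral_eq_lintegral_of_nonneg_ae (Eventually.of_forall fun t => by positivity)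
    (Measurable.aestronglyMeasurable (by fun_prop)), lintegral_kernel x δ hδ, ENNReal.toReal_ofReal pi_pos.le]

lemma indicator_abs_le (E : Set ℝ) (t : ℝ) : |E.indicator (1 : ℝ → ℝ) t| ≤ 1 := by
  by_cases h : t ∈ E <;> simp [h]

lemma lim_P (E : Set ℝ) (hE : MeasurableSet E) (x : ℝ)
    (h : Tendsto (fun δ : ℝ => ∫⁻ t : ℝ, ENNReal.ofReal (δ / ((x - t) ^ 2 + δ ^ 2)) *
      ‖E.indicator (1 : ℝ → ℝ) t - E.indicator (1 : ℝ → ℝ) x‖ₑ)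
      (nhdsWithin 0 (Ioi 0)) (nhds 0)) :
    Tendsto (fun δ => ∫ t in E, δ / ((x - t) ^ 2 + δ ^ 2)) (nhdsWithin 0 (Ioi 0))
      (nhds (π * E.indicator (1 : ℝ → ℝ) x)) := by
  have h1 := (kernel_lim _ x h (fun δ u => δ / (u ^ 2 + δ ^ 2)) (by
    intro δ u hδ; rw [abs_of_nonneg (by positivity)])).add_const (π * E.indicator (1 : ℝ → ℝ) x)
  rw [zero_add] at h1
  refine h1.congr' ?_
  filter_upwards [self_mem_nhdsWithin] with δ hδ
  have hδ : 0 < δ := hδ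
  have hi := integrable_kernel x δ hδ
  have hi2 : Integrable (fun t => δ / ((x - t) ^ 2 + δ ^ 2) * E.indicator (1 : ℝ → ℝ) t) := by
    refine hi.mul_bdd (c := 1) (measurable_one.indicator hE).aestronglyMeasurable
      (Eventually.of_forall fun t => ?_)
    exact indicator_abs_le E t
  simp_rw [mul_sub]
  rw [integral_sub hi2 (hi.mul_const _), integral_mul_const, integral_kernel x δ hδ,
    sub_add_cancel, ← integral_indicator hE]
  congr 1; ext t
  by_cases h : t ∈ E <;> simp [h]

lemma integral_odd_zero (g : ℝ → ℝ) (hg : ∀ u, g (-u) = - g u) : ∫ u, g u = 0 := by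
  have := integral_neg_eq_self g volume
  simp_rw [hg] at this
  rw [integral_neg] at this
  linarith

lemma lim_Q (E : Set ℝ) (hE : MeasurableSet E) (hEfin : volume E < ⊤) (x : ℝ)
    (h : Tendsto (fun δ : ℝ => ∫⁻ t : ℝ, ENNReal.ofReal (δ / ((x - t) ^ 2 + δ ^ 2)) *
      ‖E.indicator (1 : ℝ → ℝ) t - E.indicator (1 : ℝ → ℝ) x‖ₑ)
      (nhdsWithin 0 (Ioi 0)) (nhds 0)) (H : ℝ)
    (hH : Tendsto (fun ε : ℝ =>
        (1 / π) * ∫ t in {t : ℝ | ε < |t - x|}, E.indicator 1 t / (x - t))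
      (nhdsWithin 0 (Ioi 0)) (nhds H)) :
    Tendsto (fun δ => ∫ t in E, (x - t) / ((x - t) ^ 2 + δ ^ 2)) (nhdsWithin 0 (Ioi 0))
      (nhds (π * H)) := by
  classical
  set ψ : ℝ → ℝ → ℝ := fun δ u => u / (u ^ 2 + δ ^ 2) - if δ < |u| then 1 / u else 0 with hψ
  have hψb : ∀ δ u : ℝ, 0 < δ → |ψ δ u| ≤ δ / (u ^ 2 + δ ^ 2) := by
    intro δ u hδ
    simp only [hψ]
    split_ifs with hu
    · have hu0 : u ≠ 0 := by rintro rfl; simp at hu; linarith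
      have : u / (u ^ 2 + δ ^ 2) - 1 / u = - (δ / (u ^ 2 + δ ^ 2) * (δ / u)) := by
        field_simp; ring
      rw [this, abs_neg, abs_mul, abs_of_nonneg (show 0 ≤ δ / (u ^ 2 + δ ^ 2) by positivity)]
      apply mul_le_of_le_one_right (by positivity)
      rw [abs_div, abs_of_pos hδ, div_le_one (by positivity)]
      exact hu.le
    · rw [sub_zero, abs_div, abs_of_nonneg (show 0 ≤ u ^ 2 + δ ^ 2 by positivity)]
      gcongr
      linarith
  have hψm : ∀ δ : ℝ, Measurable (ψ δ) := by
    intro δ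
    apply Measurable.sub (by fun_prop)
    exact Measurable.ite (measurableSet_lt measurable_const (by fun_prop)) (by fun_prop)
      measurable_const
  have hψo : ∀ δ u : ℝ, ψ δ (-u) = - ψ δ u := by
    intro δ u
    simp only [hψ, abs_neg]
    split_ifs <;> simp <;> ring
  have h1 := kernel_lim _ x h ψ hψb
  have h2 := (hH.const_mul π).add h1
  rw [add_zero] at h2
  refine h2.congr' ?_
  filter_upwards [self_mem_nhdsWithin] with δ hδ
  have hδ : 0 < δ := hδ
  have hfm : Measurable (E.indicator (1 : ℝ → ℝ)) := measurable_one.indicator hE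
  have hi : Integrable (fun t => ψ δ (x - t)) := by
    refine (integrable_kernel x δ hδ).mono' ((hψm δ).comp (by fun_prop)).aestronglyMeasurable
      (Eventually.of_forall fun t => ?_)
    exact hψb δ _ hδ
  have hi2 : Integrable (fun t => ψ δ (x - t) * E.indicator (1 : ℝ → ℝ) t) :=
    hi.mul_bdd (c := 1) hfm.aestronglyMeasurable
      (Eventually.of_forall fun t => indicator_abs_le E t)
  have hfi : Integrable (E.indicator (1 : ℝ → ℝ)) := by
    rw [integrable_indicator_iff hE]
    exact integrableOn_const hEfin.ne
  have hi3 : Integrable (fun t => (if δ < |x - t| then 1 / (x - t) else 0)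
      * E.indicator (1 : ℝ → ℝ) t) := by
    refine hfi.bdd_mul (c := 1 / δ) ?_ (Eventually.of_forall fun t => ?_)
    · apply Measurable.aestronglyMeasurable
      exact Measurable.ite (measurableSet_lt measurable_const (by fun_prop)) (by fun_prop)
        measurable_const
    · rw [Real.norm_eq_abs]
      split_ifs with hu
      · rw [abs_div, abs_one]; gcongr
      · simp; positivity
  have e1 : ∫ t, ψ δ (x - t) * (E.indicator (1 : ℝ → ℝ) t - E.indicator (1 : ℝ → ℝ) x)
      = ∫ t, ψ δ (x - t) * E.indicator (1 : ℝ → ℝ) t := by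
    simp_rw [mul_sub]
    rw [integral_sub hi2 (hi.mul_const _), integral_mul_const,
      integral_sub_left_eq_self (ψ δ) volume x, integral_odd_zero _ (hψo δ)]
    simp
  have e2 : π * (1 / π * ∫ t in {t : ℝ | δ < |t - x|}, E.indicator 1 t / (x - t))
      = ∫ t, (if δ < |x - t| then 1 / (x - t) else 0) * E.indicator (1 : ℝ → ℝ) t := by
    rw [← mul_assoc, mul_one_div_cancel pi_pos.ne', one_mul, ← integral_indicator
      (measurableSet_lt measurable_const (by fun_prop))]
    congr 1; ext t
    by_cases h : δ < |x - t|
    · rw [indicator_of_mem (by rw [abs_sub_comm] at h; exact h), if_pos h]; ring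
    · rw [indicator_of_notMem (by rw [abs_sub_comm] at h; exact h), if_neg h]; ring
  rw [e1, e2, ← integral_add hi3 hi2, ← integral_indicator hE]
  congr 1; ext t
  simp only [hψ]
  by_cases h : t ∈ E <;> simp [h]

/-- The Cauchy transform of the indicator function of `E`. -/
noncomputable def cauchyT (E : Set ℝ) (z : ℂ) : ℂ := ∫ t in E, ((t : ℂ) - z)⁻¹

lemma sub_im_le (t : ℝ) (z : ℂ) : |z.im| ≤ ‖(t : ℂ) - z‖ := by
  have := Complex.abs_im_le_norm ((t : ℂ) - z)
  simpa using this

lemma ofReal_sub_ne (t : ℝ) (z : ℂ) (hz : 0 < z.im) : (t : ℂ) - z ≠ 0 := by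
  intro h
  have := sub_im_le t z
  rw [h, norm_zero, abs_of_pos hz] at this
  linarith

lemma cauchyT_measurable (z : ℂ) : Measurable fun t : ℝ => ((t : ℂ) - z)⁻¹ := by
  fun_prop

lemma cauchyT_integrable (E : Set ℝ) (hEfin : volume E < ⊤) (z : ℂ) (hz : 0 < z.im) :
    IntegrableOn (fun t : ℝ => ((t : ℂ) - z)⁻¹) E := by
  have : IsFiniteMeasure (volume.restrict E) := ⟨by simpa using hEfin⟩
  refine Integrable.of_bound (C := z.im⁻¹) (cauchyT_measurable z).aestronglyMeasurable
    (Eventually.of_forall fun t => ?_)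
  rw [norm_inv]
  have := sub_im_le t z
  rw [abs_of_pos hz] at this
  gcongr

lemma cauchyT_diff (E : Set ℝ) (hEfin : volume E < ⊤) :
    DifferentiableOn ℂ (cauchyT E) {z | 0 < z.im} := by
  intro z hz
  have hz : 0 < z.im := hz
  have : IsFiniteMeasure (volume.restrict E) := ⟨by simpa using hEfin⟩
  have hopen : IsOpen {w : ℂ | z.im / 2 < w.im} := isOpen_lt continuous_const Complex.continuous_im
  have := (hasDerivAt_integral_of_dominated_loc_of_deriv_le
    (F := fun (z : ℂ) (t : ℝ) => ((t : ℂ) - z)⁻¹) (F' := fun z t => (((t : ℂ) - z) ^ 2)⁻¹)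
    (μ := volume.restrict E) (x₀ := z) (bound := fun _ => ((z.im / 2) ^ 2)⁻¹)
    (hopen.mem_nhds (by simp only [mem_ofPred_eq]; linarith))
    (Eventually.of_forall fun w => (cauchyT_measurable w).aestronglyMeasurable)
    (cauchyT_integrable E hEfin z hz)
    (Measurable.aestronglyMeasurable (by fun_prop))
    (Eventually.of_forall fun t w hw => ?_) (integrable_const _)
    (Eventually.of_forall fun t w hw => ?_)).2
  · exact this.differentiableAt.differentiableWithinAt
  · have hw : z.im / 2 < w.im := hw
    rw [norm_inv, norm_pow]
    have := sub_im_le t w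
    rw [abs_of_pos (by linarith)] at this
    gcongr
    linarith
  · have hw : z.im / 2 < w.im := hw
    have h1 : HasDerivAt (fun w : ℂ => (t : ℂ) - w) (-1) w := by
      simpa using (hasDerivAt_id w).const_sub (t : ℂ)
    have := h1.fun_inv (ofReal_sub_ne t w (by linarith))
    simpa using this

lemma cauchyT_re (E : Set ℝ) (hEfin : volume E < ⊤) (x δ : ℝ) (hδ : 0 < δ) :
    (cauchyT E (x + δ * Complex.I)).re = - ∫ t in E, (x - t) / ((x - t) ^ 2 + δ ^ 2) := by
  have h := integral_re (𝕜 := ℂ) (cauchyT_integrable E hEfin (x + δ * Complex.I) (by simp [hδ]))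
  simp only [RCLike.re_to_complex] at h
  rw [cauchyT, ← h, ← integral_neg]
  congr 1; ext t
  rw [Complex.inv_re]
  simp [Complex.normSq_apply]
  rw [← neg_div]
  congr 1 <;> ring

lemma cauchyT_im (E : Set ℝ) (hEfin : volume E < ⊤) (x δ : ℝ) (hδ : 0 < δ) :
    (cauchyT E (x + δ * Complex.I)).im = ∫ t in E, δ / ((x - t) ^ 2 + δ ^ 2) := by
  have h := integral_im (𝕜 := ℂ) (cauchyT_integrable E hEfin (x + δ * Complex.I) (by simp [hδ]))
  simp only [RCLike.im_to_complex] at h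
  rw [cauchyT, ← h]
  congr 1; ext t
  rw [Complex.inv_im]
  simp [Complex.normSq_apply]
  congr 1; ring

lemma cauchyT_im_mem (E : Set ℝ) (hEfin : volume E < ⊤) (z : ℂ) (hz : 0 < z.im) :
    0 ≤ (cauchyT E z).im ∧ (cauchyT E z).im ≤ π := by
  have h := cauchyT_im E hEfin z.re z.im hz
  rw [Complex.re_add_im] at h
  rw [h]
  constructor
  · exact integral_nonneg fun t => by positivity
  · rw [← integral_kernel z.re z.im hz]
    exact setIntegral_le_integral (integrable_kernel _ _ hz)
      (Eventually.of_forall fun t => by positivity)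

lemma cauchyT_lim (E : Set ℝ) (hE : MeasurableSet E) (hEfin : volume E < ⊤)
    (h : ℝ → ℝ)
    (hh : ∀ᵐ x : ℝ, Tendsto (fun ε : ℝ =>
        (1 / π) * ∫ t in {t : ℝ | ε < |t - x|}, E.indicator 1 t / (x - t))
      (nhdsWithin 0 (Ioi 0)) (nhds (h x))) :
    ∀ᵐ x : ℝ, Tendsto (fun δ : ℝ => cauchyT E (x + δ * Complex.I)) (nhdsWithin 0 (Ioi 0))
      (nhds ((-(π * h x) : ℝ) + ((π * E.indicator (1 : ℝ → ℝ) x : ℝ) : ℂ) * Complex.I)) := by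
  filter_upwards [hh, ae_kernel E hE] with x h1 h2
  have hQ := (lim_Q E hE hEfin x h2 (h x) h1).neg
  have hP := lim_P E hE x h2
  have h3 := ((Complex.continuous_ofReal.tendsto _).comp hQ).add
    (((Complex.continuous_ofReal.tendsto _).comp hP).mul_const Complex.I)
  refine h3.congr' ?_
  filter_upwards [self_mem_nhdsWithin] with δ hδ
  simp only [Function.comp]
  rw [← cauchyT_re E hEfin x δ hδ, ← cauchyT_im E hEfin x δ hδ, Complex.re_add_im]

/-- asymptotics at `i∞` -/
lemma cauchyT_infty (E : Set ℝ) (hEfin : volume E < ⊤) :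
    Tendsto (fun y : ℝ => (y : ℂ) * cauchyT E (y * Complex.I)) atTop
      (nhds ((volume E).toReal * Complex.I)) := by
  have : IsFiniteMeasure (volume.restrict E) := ⟨by simpa using hEfin⟩
  have hlim : ∫ t in E, Complex.I = (volume E).toReal * Complex.I := by
    rw [setIntegral_const]; rw [Complex.real_smul]; rfl
  rw [← hlim]
  simp_rw [cauchyT, ← integral_const_mul]
  apply tendsto_integral_filter_of_dominated_convergence (fun _ => (1:ℝ))
  · exact Eventually.of_forall fun y =>
      ((cauchyT_measurable _).const_mul _).aestronglyMeasurable
  · filter_upwards [eventually_gt_atTop 0] with y hy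
    refine Eventually.of_forall fun t => ?_
    have := sub_im_le t (y * Complex.I)
    simp only [Complex.mul_im, Complex.ofReal_re, Complex.I_im, mul_one, Complex.ofReal_im,
      Complex.I_re, mul_zero, add_zero] at this
    rw [norm_mul, norm_inv, Complex.norm_real, Real.norm_eq_abs]
    exact mul_inv_le_one_of_le₀ this (norm_nonneg _)
  · exact integrable_const _
  · refine Eventually.of_forall fun t => ?_
    have h1 : Tendsto (fun y : ℝ => ((t / y : ℝ) : ℂ) - Complex.I) atTop
        (nhds ((0 : ℝ) - Complex.I)) :=
      ((Complex.continuous_ofReal.tendsto _).comp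
        (tendsto_const_nhds.div_atTop tendsto_id)).sub_const _
    have h2 := h1.inv₀ (by simp)
    have h3 : ((0 : ℝ) - Complex.I)⁻¹ = Complex.I := by simp
    rw [h3] at h2
    refine h2.congr' ?_
    filter_upwards [eventually_gt_atTop 0] with y hy
    have hy' : (y : ℂ) ≠ 0 := by exact_mod_cast hy.ne'
    have : (t : ℂ) - y * Complex.I = y * (((t / y : ℝ) : ℂ) - Complex.I) := by
      push_cast; field_simp
    rw [this, mul_inv, ← mul_assoc, mul_inv_cancel₀ hy', one_mul]

lemma exp_cauchyT_infty (E : Set ℝ) (hEfin : volume E < ⊤) :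
    Tendsto (fun y : ℝ => Complex.exp (cauchyT E (y * Complex.I))) atTop (nhds 1) ∧
    Tendsto (fun y : ℝ => (y : ℂ) * (Complex.exp (cauchyT E (y * Complex.I)) - 1)) atTop
      (nhds ((volume E).toReal * Complex.I)) := by
  have h0 : Tendsto (fun y : ℝ => cauchyT E (y * Complex.I)) atTop (nhds 0) := by
    have h1 : Tendsto (fun y : ℝ => ((y⁻¹ : ℝ) : ℂ)) atTop (nhds (0 : ℝ)) :=
      (Complex.continuous_ofReal.tendsto _).comp tendsto_inv_atTop_zero
    have h2 := h1.mul (cauchyT_infty E hEfin)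
    rw [Complex.ofReal_zero, zero_mul] at h2
    refine h2.congr' ?_
    filter_upwards [eventually_gt_atTop 0] with y hy
    have hy' : (y : ℂ) ≠ 0 := by exact_mod_cast hy.ne'
    push_cast
    rw [← mul_assoc, inv_mul_cancel₀ hy', one_mul]
  constructor
  · have := (Complex.continuous_exp.tendsto 0).comp h0
    rw [Complex.exp_zero] at this
    exact this
  · have hc : Tendsto (dslope Complex.exp 0) (nhds 0) (nhds 1) := by
      have : ContinuousAt (dslope Complex.exp 0) 0 :=
        continuousAt_dslope_same.2 Complex.differentiableAt_exp
      have h := this.tendsto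
      rw [dslope_same, Complex.deriv_exp, Complex.exp_zero] at h
      exact h
    have h2 := (cauchyT_infty E hEfin).mul (hc.comp h0)
    rw [mul_one] at h2
    refine h2.congr fun y => ?_
    have := sub_smul_dslope Complex.exp 0 (cauchyT E (y * Complex.I))
    simp only [sub_zero, smul_eq_mul, Complex.exp_zero] at this
    simp only [Function.comp]
    rw [← this]; ring

lemma hasDerivAt_anti (u : ℝ) (hu : u ≠ 1) :
    HasDerivAt (fun u : ℝ => -(u - 1)⁻¹) (1 / (u - 1) ^ 2) u := by
  have h1 : HasDerivAt (fun u : ℝ => u - 1) 1 u := (hasDerivAt_id u).sub_const 1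
  have := (h1.fun_inv (sub_ne_zero.2 hu)).neg
  have e : -(-1 / (u - 1) ^ 2) = 1 / (u - 1) ^ 2 := by rw [neg_div, neg_neg]
  rw [e] at this
  exact this

lemma anti_tendsto_top : Tendsto (fun u : ℝ => -(u - 1)⁻¹) atTop (nhds 0) := by
  have := (tendsto_inv_atTop_zero.comp (tendsto_atTop_add_const_right atTop (-1 : ℝ) tendsto_id)).neg
  simpa [sub_eq_add_neg, Function.comp_def] using this

lemma anti_tendsto_bot : Tendsto (fun u : ℝ => -(u - 1)⁻¹) atBot (nhds 0) := by
  have := (tendsto_inv_atBot_zero.comp (tendsto_atBot_add_const_right atBot (-1 : ℝ) tendsto_id)).neg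
  simpa [sub_eq_add_neg, Function.comp_def] using this

lemma mem_logset (c u : ℝ) (hu : u ≠ 0) :
    c < |log u| ↔ Real.exp c < |u| ∨ |u| < (Real.exp c)⁻¹ := by
  rw [lt_abs, ← Real.log_abs, Real.lt_log_iff_exp_lt (abs_pos.2 hu), lt_neg,
    Real.log_lt_iff_lt_exp (abs_pos.2 hu), Real.exp_neg]

lemma lintegral_logset (c : ℝ) (hc : 0 < c) :
    ∫⁻ u in {u : ℝ | c < |log u|}, ENNReal.ofReal (1 / (u - 1) ^ 2)
      = ENNReal.ofReal (4 * Real.exp c / (Real.exp c ^ 2 - 1)) := by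
  set s := Real.exp c with hs
  have hs1 : 1 < s := Real.one_lt_exp_iff.2 hc
  have hsi : s⁻¹ < 1 := inv_lt_one_of_one_lt₀ hs1
  have hsi0 : 0 < s⁻¹ := by positivity
  have hA : ({u : ℝ | c < |log u|} : Set ℝ) =ᵐ[volume]
      (Iic (-s) ∪ (Ioc (-s⁻¹) s⁻¹ ∪ Ioi s) : Set ℝ) := by
    have hne : ∀ a : ℝ, ∀ᵐ u : ℝ, u ≠ a := fun a => by simp [ae_iff]
    filter_upwards [hne 0, hne (-s), hne s⁻¹] with u h0 h1 h2
    apply propext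
    change c < |log u| ↔ (u ≤ -s ∨ (-s⁻¹ < u ∧ u ≤ s⁻¹) ∨ s < u)
    rw [mem_logset c u h0, ← hs, lt_abs, abs_lt, le_iff_lt_or_eq, le_iff_lt_or_eq]
    simp only [h1, h2, or_false]
    rw [lt_neg]
    tauto
  rw [setLIntegral_congr hA]
  have hnn : ∀ u : ℝ, 0 ≤ 1 / (u - 1) ^ 2 := fun u => by positivity
  -- the three pieces
  have p1i : IntegrableOn (fun u : ℝ => 1 / (u - 1) ^ 2) (Ioi s) :=
    integrableOn_Ioi_deriv_of_nonneg' (fun u hu => hasDerivAt_anti u (by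
      have : s ≤ u := hu
      linarith)) (fun u _ => hnn u) anti_tendsto_top
  have p1 : ∫ u in Ioi s, 1 / (u - 1) ^ 2 = 0 - -(s - 1)⁻¹ :=
    integral_Ioi_of_hasDerivAt_of_tendsto' (fun u hu => hasDerivAt_anti u (by
      have : s ≤ u := hu
      linarith)) p1i anti_tendsto_top
  have p2i : IntegrableOn (fun u : ℝ => 1 / (u - 1) ^ 2) (Iic (-s)) := 
    integrable_inv_one_add_sq.integrableOn.mono'
      (Measurable.aestronglyMeasurable (by fun_prop)) (by
      rw [ae_restrict_iff' measurableSet_Iic]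
      refine Eventually.of_forall fun u hu => ?_
      have hu : u ≤ -s := hu
      rw [Real.norm_of_nonneg (hnn u), one_div]
      gcongr
      nlinarith)
  have p2 : ∫ u in Iic (-s), 1 / (u - 1) ^ 2 = -(-s - 1)⁻¹ - 0 :=
    integral_Iic_of_hasDerivAt_of_tendsto' (fun u hu => hasDerivAt_anti u (by
      have : u ≤ -s := hu
      linarith)) p2i anti_tendsto_bot
  have hle : -s⁻¹ ≤ s⁻¹ := by linarith
  have hcont : ContinuousOn (fun u : ℝ => 1 / (u - 1) ^ 2) (Icc (-s⁻¹) s⁻¹) := by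
    apply ContinuousOn.div (by fun_prop) (by fun_prop)
    intro u hu
    have := hu.2
    exact pow_ne_zero _ (by linarith)
  have p3i : IntegrableOn (fun u : ℝ => 1 / (u - 1) ^ 2) (Ioc (-s⁻¹) s⁻¹) :=
    hcont.integrableOn_Icc.mono_set Ioc_subset_Icc_self
  have p3 : ∫ u in Ioc (-s⁻¹) s⁻¹, 1 / (u - 1) ^ 2 = -(s⁻¹ - 1)⁻¹ - -(-s⁻¹ - 1)⁻¹ := by
    rw [← intervalIntegral.integral_of_le hle]
    apply intervalIntegral.integral_eq_sub_of_hasDerivAt (f := fun u : ℝ => -(u - 1)⁻¹)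
    · intro u hu
      rw [uIcc_of_le hle] at hu
      exact hasDerivAt_anti u (by have := hu.2; linarith)
    · rw [intervalIntegrable_iff_integrableOn_Ioc_of_le hle]
      exact p3i
  have d1 : Disjoint (Ioc (-s⁻¹) s⁻¹) (Ioi s) := by
    rw [Set.disjoint_left]; rintro u ⟨_, h1⟩ (h2 : s < u); linarith
  have d2 : Disjoint (Iic (-s)) (Ioc (-s⁻¹) s⁻¹ ∪ Ioi s) := by
    rw [Set.disjoint_left]
    rintro u (h1 : u ≤ -s) (⟨h2, _⟩ | (h2 : s < u)) <;> linarith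
  rw [← ofReal_integral_eq_lintegral_ofReal (p2i.union (p3i.union p1i))
    (Eventually.of_forall hnn),
    setIntegral_union d2 (measurableSet_Ioc.union measurableSet_Ioi) p2i (p3i.union p1i),
    setIntegral_union d1 measurableSet_Ioi p3i p1i, p1, p2, p3]
  congr 1
  have a1 : s - 1 ≠ 0 := by linarith
  have a2 : -s - 1 ≠ 0 := by linarith
  have a2' : s + 1 ≠ 0 := by linarith
  have a3 : 1 - s ≠ 0 := by linarith
  have e3 : (s⁻¹ - 1)⁻¹ = - (s / (s - 1)) := by
    have : s⁻¹ - 1 = - ((s - 1) / s) := by field_simp; ring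
    rw [this, inv_neg, inv_div]
  have e4 : (-s⁻¹ - 1)⁻¹ = - (s / (s + 1)) := by
    have : -s⁻¹ - 1 = - ((s + 1) / s) := by field_simp; ring
    rw [this, inv_neg, inv_div]
  have e2 : (-s - 1)⁻¹ = - (1 / (s + 1)) := by
    have : -s - 1 = - (s + 1) := by ring
    rw [this, inv_neg, one_div]
  have e5 : s ^ 2 - 1 = (s - 1) * (s + 1) := by ring
  rw [e2, e3, e4, e5]
  field_simp
  ring

/-- passage to the limit `y → ∞` on the source side -/
lemma lim_source (S : Set ℝ) :
    Tendsto (fun n : ℕ => ∫⁻ t in S, ENNReal.ofReal ((n : ℝ) ^ 2 / (t ^ 2 + (n : ℝ) ^ 2))) atTop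
      (nhds (volume S)) := by
  have : volume S = ∫⁻ t in S, 1 := by simp
  rw [this]
  apply lintegral_tendsto_of_tendsto_of_monotone
  · intro n; fun_prop
  · have hne : ∀ᵐ u : ℝ, u ≠ 0 := by simp [ae_iff]
    filter_upwards [ae_restrict_of_ae hne] with t ht
    intro n m hnm
    apply ENNReal.ofReal_le_ofReal
    have : (n : ℝ) ^ 2 ≤ (m : ℝ) ^ 2 := by gcongr
    rw [div_le_div_iff₀ (by positivity) (by positivity)]
    nlinarith [sq_nonneg t]
  · refine Eventually.of_forall fun t => ?_
    rw [← ENNReal.ofReal_one]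
    apply (ENNReal.continuous_ofReal.tendsto _).comp
    have h1 : Tendsto (fun n : ℕ => t / (n : ℝ)) atTop (nhds 0) :=
      tendsto_const_nhds.div_atTop tendsto_natCast_atTop_atTop
    have h2 := (((h1.pow 2).add_const 1).inv₀ (by norm_num))
    norm_num at h2
    refine h2.congr' ?_
    filter_upwards [eventually_gt_atTop 0] with n hn
    have : (0:ℝ) < n := by exact_mod_cast hn
    field_simp

/-- passage to the limit on the target side -/
lemma lim_target (c : ℝ) (hc : 0 < c) (a b : ℕ → ℝ) (m : ℝ) (ha : Tendsto a atTop (nhds 1))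
    (hb : Tendsto b atTop (nhds 0)) (hm : Tendsto (fun n : ℕ => n * b n) atTop (nhds m)) :
    Tendsto (fun n : ℕ => ∫⁻ u in {u : ℝ | c < |log u|},
        ENNReal.ofReal ((n * b n) / ((u - a n) ^ 2 + b n ^ 2))) atTop
      (nhds (∫⁻ u in {u : ℝ | c < |log u|}, ENNReal.ofReal (m / (u - 1) ^ 2))) := by
  set s := Real.exp c with hs
  have hs1 : 1 < s := Real.one_lt_exp_iff.2 hc
  have hsi : s⁻¹ < 1 := inv_lt_one_of_one_lt₀ hs1
  have hsi0 : 0 < s⁻¹ := by positivity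
  have hmeasA : MeasurableSet {u : ℝ | c < |log u|} :=
    measurableSet_lt measurable_const (by fun_prop)
  have hdist : ∀ u : ℝ, c < |log u| → 1 - s⁻¹ ≤ |u - 1| := by
    intro u hu
    have h0 : u ≠ 0 := by rintro rfl; simp at hu; linarith
    rw [mem_logset c u h0, ← hs] at hu
    have hss : s * s⁻¹ = 1 := mul_inv_cancel₀ (by positivity)
    rcases hu with hu | hu
    · have h1 : |u| - 1 ≤ |u - 1| := by simpa using abs_sub_abs_le_abs_sub u 1
      nlinarith
    · have h1 : 1 - |u| ≤ |u - 1| := by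
        rw [abs_sub_comm]; simpa using abs_sub_abs_le_abs_sub 1 u
      linarith
  apply tendsto_lintegral_filter_of_dominated_convergence
    (fun u => ENNReal.ofReal (4 * (m + 1)) * ENNReal.ofReal (1 / (u - 1) ^ 2))
  · exact Eventually.of_forall fun n => by fun_prop
  · have e1 : ∀ᶠ n in atTop, n * b n ≤ m + 1 := hm.eventually_le_const (by linarith)
    have e1' : ∀ᶠ n in atTop, m - 1 ≤ n * b n := hm.eventually_const_le (by linarith)
    have e2 : ∀ᶠ n in atTop, |a n - 1| < (1 - s⁻¹) / 2 :=
      (Metric.tendsto_nhds.1 ha) _ (by linarith)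
    filter_upwards [e1, e2] with n h1 h2
    rw [ae_restrict_iff' hmeasA]
    refine Eventually.of_forall fun u hu => ?_
    have hd := hdist u hu
    have h3 : |u - 1| / 2 ≤ |u - a n| := by
      have := abs_sub_abs_le_abs_sub (u - 1) (a n - 1)
      have h4 : u - 1 - (a n - 1) = u - a n := by ring
      rw [h4] at this
      linarith
    have h5 : 0 < |u - 1| := by linarith
    have h6 : (u - 1) ^ 2 / 4 ≤ (u - a n) ^ 2 + b n ^ 2 := by
      rw [← sq_abs (u - 1), ← sq_abs (u - a n)]
      nlinarith [sq_nonneg (b n)]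
    have h7 : 0 < (u - 1) ^ 2 := by rw [← sq_abs]; positivity
    rcases le_or_gt (n * b n) 0 with h0 | h0
    · rw [ENNReal.ofReal_of_nonpos (div_nonpos_of_nonpos_of_nonneg h0 (by positivity))]
      exact zero_le
    · rw [← ENNReal.ofReal_mul (by linarith)]
      apply ENNReal.ofReal_le_ofReal
      calc n * b n / ((u - a n) ^ 2 + b n ^ 2) ≤ (m + 1) / ((u - 1) ^ 2 / 4) := by
            gcongr
            linarith
        _ = _ := by field_simp
  · rw [lintegral_const_mul _ (by fun_prop), lintegral_logset c hc]
    exact ENNReal.mul_ne_top ENNReal.ofReal_ne_top ENNReal.ofReal_ne_top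
  · rw [ae_restrict_iff' hmeasA]
    refine Eventually.of_forall fun u hu => ?_
    have hd := hdist u hu
    have h5 : 0 < |u - 1| := by linarith
    have h7 : 0 < (u - 1) ^ 2 := by rw [← sq_abs]; positivity
    apply (ENNReal.continuous_ofReal.tendsto _).comp
    have hden : Tendsto (fun n => (u - a n) ^ 2 + b n ^ 2) atTop (nhds ((u - 1) ^ 2 + 0 ^ 2)) :=
      ((ha.const_sub u).pow 2).add (hb.pow 2)
    have := hm.div hden (by positivity)
    rw [zero_pow two_ne_zero, add_zero] at this
    exact this

/-- Uniqueness of the distribution for fixed height `n`. -/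
lemma dist_identity (Φ : ℂ → ℂ) (hd : DifferentiableOn ℂ Φ {z | 0 < z.im})
    (him : ∀ z : ℂ, 0 < z.im → 0 ≤ (Φ z).im) (φ : ℝ → ℝ) (hφ : AEMeasurable φ)
    (hlim : ∀ᵐ x : ℝ, Tendsto (fun δ : ℝ => Φ (x + δ * Complex.I)) (nhdsWithin 0 (Ioi 0))
      (nhds (φ x))) (y : ℝ) (hy : 0 < y) (hb : 0 < (Φ (y * Complex.I)).im)
    (A : Set ℝ) (hA : MeasurableSet A) :
    ∫⁻ t in φ ⁻¹' A, ENNReal.ofReal (y ^ 2 / (t ^ 2 + y ^ 2))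
      = ∫⁻ u in A, ENNReal.ofReal ((y * (Φ (y * Complex.I)).im) /
        ((u - (Φ (y * Complex.I)).re) ^ 2 + (Φ (y * Complex.I)).im ^ 2)) := by
  set a := (Φ (y * Complex.I)).re with ha
  obtain ⟨b, hbb⟩ : ∃ b : NNReal, (b : ℝ) = (Φ (y * Complex.I)).im := ⟨⟨_, hb.le⟩, rfl⟩
  rw [← hbb] at hb ⊢
  lift y to NNReal using hy.le
  have hy0 : y ≠ 0 := by rintro rfl; simp at hy
  have hb0 : b ≠ 0 := by rintro rfl; simp at hb
  have key := map_cauchy Φ hd him φ hφ hlim y hy0 b hb0 hbb.symm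
  have hac : ProbabilityTheory.cauchyMeasure 0 y ≪ volume := by
    rw [ProbabilityTheory.cauchyMeasure_of_scale_ne_zero 0 hy0]
    exact withDensity_absolutelyContinuous _ _
  have h1 : (ProbabilityTheory.cauchyMeasure 0 y).map φ A =
      ProbabilityTheory.cauchyMeasure a b A := by rw [key]
  have hnull : NullMeasurableSet (φ ⁻¹' A) volume := hφ.nullMeasurableSet_preimage hA
  rw [Measure.map_apply_of_aemeasurable (hφ.mono_ac hac) hA,
    ProbabilityTheory.cauchyMeasure_of_scale_ne_zero 0 hy0,
    ProbabilityTheory.cauchyMeasure_of_scale_ne_zero _ hb0,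
    withDensity_apply₀ _ hnull, withDensity_apply _ hA] at h1
  have h2 := congrArg (ENNReal.ofReal (π * y) * ·) h1
  beta_reduce at h2
  rw [← lintegral_const_mul _ (ProbabilityTheory.measurable_cauchyPDF _ _),
    ← lintegral_const_mul _ (ProbabilityTheory.measurable_cauchyPDF _ _)] at h2
  refine (lintegral_congr fun t => ?_).trans (h2.trans (lintegral_congr fun u => ?_))
  · rw [ProbabilityTheory.cauchyPDF_def, ← ENNReal.ofReal_mul (by positivity),
      ProbabilityTheory.cauchyPDFReal_def, sub_zero]
    congr 1; field_simp
  · rw [ProbabilityTheory.cauchyPDF_def, ← ENNReal.ofReal_mul (by positivity),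
      ProbabilityTheory.cauchyPDFReal_def]
    congr 1; field_simp

/-- Stein–Weiss identity: If `E ⊂ ℝ` is measurable with finite
Lebesgue measure and `h` is (a.e.) the Hilbert transform of `𝟙_E`, i.e. for
a.e. `x` the truncated transforms `(1/π) ∫_{|t-x|>ε} 𝟙_E(t)/(x-t) dt` tend to
`h x` as `ε → 0⁺`, then for every `λ > 0`,
`|{x : |h x| > λ}| = 4 e^{πλ} |E| / (e^{2πλ} - 1)`. -/
theorem stmt7 (E : Set ℝ) (hE : MeasurableSet E) (hEfin : volume E < ⊤)
    (h : ℝ → ℝ)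
    (hh : ∀ᵐ x : ℝ, Tendsto (fun ε : ℝ =>
        (1 / π) * ∫ t in {t : ℝ | ε < |t - x|}, E.indicator 1 t / (x - t))
      (nhdsWithin 0 (Ioi 0)) (nhds (h x)))
    (lam : ℝ) (hlam : 0 < lam) :
    volume {x : ℝ | lam < |h x|}
      = ENNReal.ofReal
          (4 * Real.exp (π * lam) * (volume E).toReal
            / (Real.exp (2 * π * lam) - 1)) := by
  have hlimT := cauchyT_lim E hE hEfin h hh
  have hTd := cauchyT_diff E hEfin
  by_cases hE0 : volume E = 0
  · -- degenerate case
    rw [hE0]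
    simp only [ENNReal.toReal_zero, mul_zero, zero_div, ENNReal.ofReal_zero]
    have : ∀ᵐ x : ℝ, h x = 0 := by
      filter_upwards [hlimT] with x hx
      have hz : ∀ z, cauchyT E z = 0 := by
        intro z
        rw [cauchyT, Measure.restrict_eq_zero.2 hE0, integral_zero_measure]
      simp only [hz] at hx
      have h1 := congrArg Complex.re (tendsto_nhds_unique hx tendsto_const_nhds)
      simpa [pi_pos.ne'] using h1
    refine measure_mono_null ?_ (ae_iff.1 this)
    intro x hx h0
    have hx : lam < |h x| := hx
    rw [h0, abs_zero] at hx
    linarith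
  have hm : 0 < (volume E).toReal := ENNReal.toReal_pos hE0 hEfin.ne
  set m := (volume E).toReal with hmdef
  -- the function `Φ`
  set Φ : ℂ → ℂ := fun z => Complex.exp (cauchyT E z) with hΦ
  set φ : ℝ → ℝ := fun x => Real.exp (-(π * h x)) * Real.cos (π * E.indicator (1 : ℝ → ℝ) x)
    with hφdef
  have hΦd : DifferentiableOn ℂ Φ {z | 0 < z.im} := hTd.cexp
  have hΦim : ∀ z : ℂ, 0 < z.im → 0 ≤ (Φ z).im := by
    intro z hz
    have := cauchyT_im_mem E hEfin z hz
    simp only [hΦ]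
    rw [Complex.exp_im]
    exact mul_nonneg (Real.exp_pos _).le (Real.sin_nonneg_of_nonneg_of_le_pi this.1 this.2)
  have hlim : ∀ᵐ x : ℝ, Tendsto (fun δ : ℝ => Φ (x + δ * Complex.I)) (nhdsWithin 0 (Ioi 0))
      (nhds (φ x)) := by
    filter_upwards [hlimT] with x hx
    have h1 := (Complex.continuous_exp.tendsto _).comp hx
    have h2 : Complex.exp ((-(π * h x) : ℝ) +
        ((π * E.indicator (1 : ℝ → ℝ) x : ℝ) : ℂ) * Complex.I) = φ x := by
      rw [Complex.exp_add, Complex.exp_mul_I, ← Complex.ofReal_exp, ← Complex.ofReal_cos,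
        ← Complex.ofReal_sin]
      have : Real.sin (π * E.indicator (1 : ℝ → ℝ) x) = 0 := by
        by_cases hx : x ∈ E <;> simp [hx]
      rw [this]
      simp [hφdef]
    rw [h2] at h1
    exact h1
  have hφm : AEMeasurable φ := by
    have h1 : AEMeasurable (fun x => (φ x : ℂ)) := by
      refine aemeasurable_of_tendsto_metrizable_ae (nhdsWithin (0:ℝ) (Ioi 0))
        (f := fun δ x => if 0 < δ then Φ ((x : ℝ) + (δ : ℝ) * Complex.I) else 0) ?_ ?_
      · intro δ
        by_cases hδ : 0 < δ
        · simp only [hδ, if_true]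
          apply Continuous.aemeasurable
          exact hΦd.continuousOn.comp_continuous (by fun_prop) (by intro t; simp [hδ])
        · simp only [hδ, if_false]
          exact aemeasurable_const
      · filter_upwards [hlim] with x hx
        refine hx.congr' ?_
        filter_upwards [self_mem_nhdsWithin] with δ hδ
        exact (if_pos (show 0 < δ from hδ)).symm
    exact Complex.measurable_re.comp_aemeasurable h1
  have hc : 0 < π * lam := by positivity
  have hset : {x : ℝ | lam < |h x|} = φ ⁻¹' {u : ℝ | π * lam < |log u|} := by
    ext x
    change lam < |h x| ↔ π * lam < |log (φ x)|
    have : log (φ x) = -(π * h x) := by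
      rw [← Real.log_abs]
      have h1 : |φ x| = Real.exp (-(π * h x)) := by
        simp only [hφdef]
        rw [abs_mul, Real.abs_exp]
        by_cases hx : x ∈ E <;> simp [hx]
      rw [h1, Real.log_exp]
    rw [this, abs_neg, abs_mul, abs_of_pos pi_pos]
    exact (mul_lt_mul_iff_right₀ pi_pos).symm
  obtain ⟨l1, l2⟩ := exp_cauchyT_infty E hEfin
  have l1n : Tendsto (fun n : ℕ => Φ ((n : ℝ) * Complex.I)) atTop (nhds 1) :=
    l1.comp tendsto_natCast_atTop_atTop
  have l2n := l2.comp (tendsto_natCast_atTop_atTop (R := ℝ))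
  have la : Tendsto (fun n : ℕ => (Φ ((n : ℝ) * Complex.I)).re) atTop (nhds 1) := by
    have := (Complex.continuous_re.tendsto _).comp l1n
    exact this
  have lb : Tendsto (fun n : ℕ => (Φ ((n : ℝ) * Complex.I)).im) atTop (nhds 0) := by
    have := (Complex.continuous_im.tendsto _).comp l1n
    exact this
  have lm : Tendsto (fun n : ℕ => n * (Φ ((n : ℝ) * Complex.I)).im) atTop (nhds m) := by
    have h1 := (Complex.continuous_im.tendsto _).comp l2n
    have h2 : ((m : ℂ) * Complex.I).im = m := by simp
    rw [h2] at h1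
    refine h1.congr fun n => ?_
    simp [hΦ, Function.comp]
  have t1 := lim_source {x : ℝ | lam < |h x|}
  have t2 := lim_target (π * lam) hc _ _ m la lb lm
  have heq : (fun n : ℕ => ∫⁻ t in {x : ℝ | lam < |h x|},
        ENNReal.ofReal ((n : ℝ) ^ 2 / (t ^ 2 + (n : ℝ) ^ 2))) =ᶠ[atTop]
      (fun n : ℕ => ∫⁻ u in {u : ℝ | π * lam < |log u|},
        ENNReal.ofReal ((n * (Φ ((n : ℝ) * Complex.I)).im) /
          ((u - (Φ ((n : ℝ) * Complex.I)).re) ^ 2 + (Φ ((n : ℝ) * Complex.I)).im ^ 2))) := by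
    filter_upwards [eventually_gt_atTop 0, lm.eventually_const_lt hm] with n hn hpos
    have hn' : (0:ℝ) < n := by exact_mod_cast hn
    rw [hset]
    exact dist_identity Φ hΦd hΦim φ hφm hlim n hn' (pos_of_mul_pos_right hpos hn'.le) _
      (measurableSet_lt measurable_const (by fun_prop))
  rw [tendsto_nhds_unique (t1.congr' heq) t2]
  have : ∀ u : ℝ, ENNReal.ofReal (m / (u - 1) ^ 2)
      = ENNReal.ofReal m * ENNReal.ofReal (1 / (u - 1) ^ 2) := by
    intro u
    rw [← ENNReal.ofReal_mul hm.le, mul_one_div]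
  simp_rw [this]
  rw [lintegral_const_mul _ (by fun_prop), lintegral_logset _ hc, ← ENNReal.ofReal_mul hm.le]
  congr 1
  have : Real.exp (2 * π * lam) = Real.exp (π * lam) ^ 2 := by
    rw [← Real.exp_nat_mul]; congr 1; push_cast; ring
  rw [this]
  ring
end

section
/- For every set e ⊂ ℝ of Lebesgue measure zero, there exists a measurable set E ⊂ ℝ of finite Lebesgue measure such that the maximal Hilbert transform H*𝟙_E(x) = sup_{ε>0} |H_ε 𝟙_E(x)| is infinite for every x ∈ e. -/
open MeasureTheory Filter Set Real
open scoped Topology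


theorem F_mono (T : Finset ℝ) (c : ℝ → ℝ) (hc : ∀ t ∈ T, 0 < c t) (hT : T.Nonempty) {x y : ℝ}
    (hxy : x < y) (h : ∀ s ∈ T, s < x ∨ y < s) :
    1 + ∑ t ∈ T, c t / (t - x) < 1 + ∑ t ∈ T, c t / (t - y) := by
  gcongr 1 + ?_
  apply Finset.sum_lt_sum_of_nonempty hT
  intro s hs
  have := hc s hs
  rcases h s hs with h1 | h1
  · rw [← neg_lt_neg_iff, ← div_neg, ← div_neg]
    apply div_lt_div_of_pos_left this <;> linarith
  · apply div_lt_div_of_pos_left this <;> linarith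

theorem F_cont (T : Finset ℝ) (c : ℝ → ℝ) {x : ℝ} (h : x ∉ T) :
    ContinuousAt (fun x => 1 + ∑ t ∈ T, c t / (t - x)) x := by
  apply ContinuousAt.add continuousAt_const
  apply tendsto_finsetSum
  intro t ht
  apply ContinuousAt.div continuousAt_const (by fun_prop)
  intro h0
  apply h
  rwa [← sub_eq_zero.1 h0]

theorem F_left (T : Finset ℝ) (c : ℝ → ℝ) (hc : ∀ t ∈ T, 0 < c t) {t : ℝ} (ht : t ∈ T) :
    Tendsto (fun x => 1 + ∑ t ∈ T, c t / (t - x)) (𝓝[<] t) atTop := by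
  have : (fun x => 1 + ∑ t ∈ T, c t / (t - x)) =
      fun x => (1 + ∑ t ∈ T.erase t, c t / (t - x)) + c t / (t - x) := by
    ext x
    rw [← Finset.sum_erase_add _ _ ht]; ring
  rw [this]
  refine Tendsto.add_atTop (C := 1 + ∑ s ∈ T.erase t, c s / (s - t)) ?_ ?_
  · exact (F_cont (T.erase t) c (by simp)).tendsto.mono_left nhdsWithin_le_nhds
  · simp_rw [div_eq_mul_inv]
    apply Tendsto.const_mul_atTop (hc t ht)
    apply tendsto_inv_nhdsGT_zero.comp
    rw [tendsto_nhdsWithin_iff]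
    constructor
    · apply Tendsto.mono_left _ nhdsWithin_le_nhds
      have : ContinuousAt (fun x : ℝ => t - x) t := by fun_prop
      simpa [ContinuousAt] using this
    · filter_upwards [self_mem_nhdsWithin] with x hx
      simpa using hx

theorem F_right (T : Finset ℝ) (c : ℝ → ℝ) (hc : ∀ t ∈ T, 0 < c t) {t : ℝ} (ht : t ∈ T) :
    Tendsto (fun x => 1 + ∑ t ∈ T, c t / (t - x)) (𝓝[>] t) atBot := by
  have : (fun x => 1 + ∑ t ∈ T, c t / (t - x)) =
      fun x => (1 + ∑ t ∈ T.erase t, c t / (t - x)) + c t / (t - x) := by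
    ext x
    rw [← Finset.sum_erase_add _ _ ht]; ring
  rw [this]
  refine Tendsto.add_atBot (C := 1 + ∑ s ∈ T.erase t, c s / (s - t)) ?_ ?_
  · exact (F_cont (T.erase t) c (by simp)).tendsto.mono_left nhdsWithin_le_nhds
  · simp_rw [div_eq_mul_inv]
    apply Tendsto.const_mul_atBot (hc t ht)
    apply tendsto_inv_nhdsLT_zero.comp
    rw [tendsto_nhdsWithin_iff]
    constructor
    · apply Tendsto.mono_left _ nhdsWithin_le_nhds
      have : ContinuousAt (fun x : ℝ => t - x) t := by fun_prop
      simpa [ContinuousAt] using this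
    · filter_upwards [self_mem_nhdsWithin] with x hx
      simpa using hx

theorem F_top (T : Finset ℝ) (c : ℝ → ℝ) :
    Tendsto (fun x => 1 + ∑ t ∈ T, c t / (t - x)) atTop (𝓝 1) := by
  have : Tendsto (fun x => 1 + ∑ t ∈ T, c t / (t - x)) atTop (𝓝 (1 + ∑ t ∈ T, 0)) := by
    apply Tendsto.add tendsto_const_nhds
    apply tendsto_finsetSum
    intro t ht
    have h : Tendsto (fun x : ℝ => t - x) atTop atBot := by
      simp_rw [sub_eq_add_neg]
      exact tendsto_atBot_add_const_left _ _ tendsto_neg_atTop_atBot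
    exact h.const_div_atBot _
  simpa using this

theorem F_root (T : Finset ℝ) (c : ℝ → ℝ) (hc : ∀ t ∈ T, 0 < c t) {t : ℝ} (ht : t ∈ T) :
    ∃ a, t < a ∧ 1 + ∑ t ∈ T, c t / (t - a) = 0 ∧ (∀ s ∈ T, s ≤ t ∨ a < s) ∧
      (∀ x, t < x → x < a → 1 + ∑ t ∈ T, c t / (t - x) < 0) ∧
      (∀ x, a < x → (∀ s ∈ T, s ≤ t ∨ x < s) → 0 < 1 + ∑ t ∈ T, c t / (t - x)) := by
  have hT : T.Nonempty := ⟨t, ht⟩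
  obtain ⟨b, htb, hbT, hb⟩ : ∃ b, t < b ∧ (∀ s ∈ T, s ≤ t ∨ b < s) ∧
      0 < 1 + ∑ t ∈ T, c t / (t - b) := by
    by_cases hne : (T.filter (t < ·)).Nonempty
    · set t' := (T.filter (t < ·)).min' hne with ht'
      have hm : t' ∈ T.filter (t < ·) := Finset.min'_mem _ _
      rw [Finset.mem_filter] at hm
      have h1 := (F_left T c hc hm.1).eventually_gt_atTop 0
      have h2 : ∀ᶠ x in 𝓝[<] t', x ∈ Ioo t t' := Ioo_mem_nhdsLT hm.2
      obtain ⟨b, hb1, hb2⟩ := (h1.and h2).exists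
      refine ⟨b, hb2.1, ?_, hb1⟩
      intro s hs
      by_cases h : s ≤ t
      · exact Or.inl h
      · right
        refine hb2.2.trans_le (Finset.min'_le _ _ ?_)
        simp [hs]; linarith
    · have h1 := (F_top T c).eventually (lt_mem_nhds (show (0:ℝ) < 1 by norm_num))
      obtain ⟨b, hb1, hb2⟩ := (h1.and (eventually_gt_atTop t)).exists
      refine ⟨b, hb2, ?_, hb1⟩
      intro s hs
      left
      by_contra h
      exact hne ⟨s, by simp [hs]; linarith⟩
  obtain ⟨b', hb', hb'2⟩ := (((F_right T c hc ht).eventually_lt_atBot 0).and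
    (Ioo_mem_nhdsGT htb : ∀ᶠ x in 𝓝[>] t, x ∈ Ioo t b)).exists
  have hcont : ContinuousOn (fun x => 1 + ∑ t ∈ T, c t / (t - x)) (Icc b' b) := by
    intro x hx
    apply (F_cont T c _).continuousWithinAt
    intro hxT
    rcases hbT x hxT with h | h
    · linarith [hx.1, hb'2.1]
    · linarith [hx.2]
  obtain ⟨a, ha, ha0⟩ := intermediate_value_Icc hb'2.2.le hcont (show (0:ℝ) ∈ Icc _ _ from ⟨hb'.le, hb.le⟩)
  simp only at ha0
  have hta : t < a := hb'2.1.trans_le ha.1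
  refine ⟨a, hta, ha0, ?_, ?_, ?_⟩
  · intro s hs
    rcases hbT s hs with h | h
    · exact Or.inl h
    · right; linarith [ha.2]
  · intro x hx hxa
    rw [← ha0]
    apply F_mono T c hc hT hxa
    intro s hs
    rcases hbT s hs with h | h
    · left; linarith
    · right; linarith [ha.2]
  · intro x hx hxs
    rw [← ha0]
    apply F_mono T c hc hT hx
    intro s hs
    rcases hxs s hs with h | h
    · left; linarith
    · right; linarith

open Polynomial in
theorem F_poly (T : Finset ℝ) (c a : ℝ → ℝ) (hinj : Set.InjOn a T)
    (haT : ∀ t ∈ T, a t ∉ T) (ha : ∀ t ∈ T, 1 + ∑ s ∈ T, c s / (s - a t) = 0) (hT : T.Nonempty) :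
    (∏ t ∈ T, (X - C (a t)) : ℝ[X]) =
      ∏ t ∈ T, (X - C t) - ∑ t ∈ T, C (c t) * ∏ s ∈ T.erase t, (X - C s) := by
  have hS : (∑ t ∈ T, C (c t) * ∏ s ∈ T.erase t, (X - C s) : ℝ[X]).degree < (T.card : ℕ) := by
    rw [Polynomial.degree_lt_iff_coeff_zero]
    intro m hm
    rw [Polynomial.finsetSum_coeff]
    apply Finset.sum_eq_zero
    intro t ht
    rw [coeff_C_mul]
    have : (∏ s ∈ T.erase t, (X - C s) : ℝ[X]).coeff m = 0 := by
      apply coeff_eq_zero_of_natDegree_lt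
      rw [natDegree_prod_of_monic _ _ (fun i _ => monic_X_sub_C i)]
      simp [Finset.card_erase_of_mem ht]
      have := hT.card_pos
      omega
    rw [this, mul_zero]
  have hcard : (T.image a).card = T.card := Finset.card_image_of_injOn hinj
  have hA : (∏ t ∈ T, (X - C (a t)) : ℝ[X]).degree = T.card := by
    rw [degree_prod]; simp
  have hB : (∏ t ∈ T, (X - C t) : ℝ[X]).degree = T.card := by
    rw [degree_prod]; simp
  apply Polynomial.eq_of_degree_sub_lt_of_eval_finset_eq (T.image a)
  · rw [hcard, ← sub_add]
    refine (degree_add_le _ _).trans_lt (max_lt ?_ hS)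
    rw [← hA]
    apply degree_sub_lt_left (hA.trans hB.symm)
    · exact (monic_prod_of_monic _ _ fun i _ => monic_X_sub_C _).ne_zero
    · rw [(monic_prod_of_monic _ _ fun i _ => monic_X_sub_C _).leadingCoeff, (monic_prod_of_monic _ _ fun i _ => monic_X_sub_C _).leadingCoeff]
  · intro x hx
    obtain ⟨t, ht, rfl⟩ := Finset.mem_image.1 hx
    have h1 : eval (a t) (∏ t ∈ T, (X - C (a t)) : ℝ[X]) = 0 := by
      rw [eval_prod]
      exact Finset.prod_eq_zero ht (by simp)
    rw [h1, eval_sub, eval_prod, eval_finsetSum]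
    simp only [eval_mul, eval_C, eval_prod, eval_sub, eval_X]
    have h2 : ∀ s ∈ T, c s * ∏ r ∈ T.erase s, (a t - r) = -(c s / (s - a t)) * ∏ r ∈ T, (a t - r) := by
      intro s hs
      rw [← Finset.mul_prod_erase T _ hs]
      have : s - a t ≠ 0 := by
        intro h
        apply haT t ht
        rwa [← sub_eq_zero.1 h]
      field_simp
      ring
    rw [Finset.sum_congr rfl h2, ← Finset.sum_mul, Finset.sum_neg_distrib]
    linear_combination (-∏ r ∈ T, (a t - r)) * ha t ht

open Polynomial in
theorem F_sum (T : Finset ℝ) (c a : ℝ → ℝ) (hT : T.Nonempty)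
    (h : (∏ t ∈ T, (X - C (a t)) : ℝ[X]) =
      ∏ t ∈ T, (X - C t) - ∑ t ∈ T, C (c t) * ∏ s ∈ T.erase t, (X - C s)) :
    ∑ t ∈ T, (a t - t) = ∑ t ∈ T, c t := by
  have h1 := congrArg (fun p => p.coeff (T.card - 1)) h
  simp only [coeff_sub, finsetSum_coeff, coeff_C_mul] at h1
  rw [Polynomial.prod_X_sub_C_coeff_card_pred _ _ hT.card_pos,
    Polynomial.prod_X_sub_C_coeff_card_pred _ (fun t => t) hT.card_pos] at h1
  have h2 : ∀ t ∈ T, c t * (∏ s ∈ T.erase t, (X - C s) : ℝ[X]).coeff (T.card - 1) = c t := by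
    intro t ht
    have : (∏ s ∈ T.erase t, (X - C s) : ℝ[X]).coeff (T.card - 1) = 1 := by
      have hm : (∏ s ∈ T.erase t, (X - C s) : ℝ[X]).Monic := monic_prod_of_monic _ _ fun i _ => monic_X_sub_C _
      have hd : (∏ s ∈ T.erase t, (X - C s) : ℝ[X]).natDegree = T.card - 1 := by
        rw [natDegree_prod_of_monic _ _ (fun i _ => monic_X_sub_C i)]
        simp [Finset.card_erase_of_mem ht]
      rw [← hd]; exact hm.coeff_natDegree
    rw [this, mul_one]
  rw [Finset.sum_congr rfl h2] at h1
  rw [Finset.sum_sub_distrib]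
  linarith

open Polynomial in
theorem F_main (T : Finset ℝ) (c : ℝ → ℝ) (hc : ∀ t ∈ T, 0 < c t) :
    ∃ a : ℝ → ℝ, (∀ t ∈ T, t < a t) ∧
      (∀ s ∈ T, ∀ t ∈ T, s ≠ t → Disjoint (Ioc s (a s)) (Ioc t (a t))) ∧
      ({x | 1 + ∑ t ∈ T, c t / (t - x) < 0} : Set ℝ) =ᵐ[volume] (⋃ t ∈ T, Ioc t (a t) : Set ℝ) ∧
      ∑ t ∈ T, (a t - t) = ∑ t ∈ T, c t ∧
      (∏ t ∈ T, (X - C (a t)) : ℝ[X]) =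
        ∏ t ∈ T, (X - C t) - ∑ t ∈ T, C (c t) * ∏ s ∈ T.erase t, (X - C s) := by
  choose! a h1 h2 h3 h4 h5 using fun t (ht : t ∈ T) => F_root T c hc ht
  have key : ∀ s ∈ T, ∀ t ∈ T, s < t → a s < t := by
    intro s hs t ht hst
    rcases h3 s hs t ht with h | h
    · linarith
    · exact h
  have hinj : Set.InjOn a T := by
    intro s hs t ht hst
    rcases lt_trichotomy s t with h | h | h
    · linarith [key s hs t ht h, h1 t ht]
    · exact h
    · linarith [key t ht s hs h, h1 s hs]
  have haT : ∀ t ∈ T, a t ∉ T := by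
    intro t ht h
    rcases h3 t ht _ h with h | h
    · linarith [h1 t ht]
    · linarith
  have hP : (∏ t ∈ T, (X - C (a t)) : ℝ[X]) =
        ∏ t ∈ T, (X - C t) - ∑ t ∈ T, C (c t) * ∏ s ∈ T.erase t, (X - C s) := by
    rcases T.eq_empty_or_nonempty with rfl | hT
    · simp
    · exact F_poly T c a hinj haT h2 hT
  refine ⟨a, h1, ?_, ?_, ?_, hP⟩
  · intro s hs t ht hst
    rw [Set.disjoint_left]
    rintro x ⟨hx1, hx2⟩ ⟨hx3, hx4⟩
    rcases lt_or_gt_of_ne hst with h | h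
    · linarith [key s hs t ht h]
    · linarith [key t ht s hs h]
  · have hnull : volume ((T : Set ℝ) ∪ (T.image a : Set ℝ)) = 0 := by
      apply Set.Finite.measure_zero
      exact (Finset.finite_toSet T).union (Finset.finite_toSet _)
    have hae : ∀ᵐ x, x ∉ ((T : Set ℝ) ∪ (T.image a : Set ℝ)) := by
      exact measure_eq_zero_iff_ae_notMem.1 hnull
    filter_upwards [hae] with x hx
    have hxT : x ∉ T := fun h => hx (Or.inl h)
    have hxa : ∀ t ∈ T, x ≠ a t := by
      intro t ht h
      exact hx (Or.inr (by rw [h]; exact_mod_cast Finset.mem_image_of_mem a ht))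
    apply propext
    change (1 + ∑ t ∈ T, c t / (t - x) < 0) ↔ x ∈ (⋃ t ∈ T, Ioc t (a t) : Set ℝ)
    rw [Set.mem_iUnion₂]
    constructor
    · intro hF
      have hne : (T.filter (· < x)).Nonempty := by
        by_contra hne
        have : 0 ≤ ∑ t ∈ T, c t / (t - x) := by
          apply Finset.sum_nonneg
          intro t ht
          apply div_nonneg (hc t ht).le
          by_contra h
          exact hne ⟨t, by simp [ht]; linarith⟩
        linarith
      have hm := Finset.max'_mem _ hne
      set t := (T.filter (· < x)).max' hne with htdef
      rw [Finset.mem_filter] at hm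
      refine ⟨t, hm.1, hm.2, ?_⟩
      by_contra hlt
      push Not at hlt
      have := h5 t hm.1 x hlt (by
        intro s hs
        by_cases hsx : s < x
        · left; exact Finset.le_max' _ _ (by simp [hs, hsx])
        · right
          exact lt_of_le_of_ne (not_lt.1 hsx) (fun h => hxT (h ▸ hs)))
      linarith
    · rintro ⟨t, ht, hx1, hx2⟩
      exact h4 t ht x hx1 (lt_of_le_of_ne hx2 (hxa t ht))
  · rcases T.eq_empty_or_nonempty with rfl | hT
    · simp
    · exact F_sum T c a hT hP

theorem F_meas (T : Finset ℝ) (c : ℝ → ℝ) :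
    MeasurableSet {x | 1 + ∑ t ∈ T, c t / (t - x) < 0} := by
  apply measurableSet_lt _ measurable_const
  fun_prop

theorem boole (T : Finset ℝ) (c : ℝ → ℝ) (hc : ∀ t ∈ T, 0 < c t) :
    volume {x | 1 + ∑ t ∈ T, c t / (t - x) < 0} = ENNReal.ofReal (∑ t ∈ T, c t) := by
  obtain ⟨a, h1, h2, h3, h4, -⟩ := F_main T c hc
  rw [measure_congr h3, measure_biUnion_finset (fun s hs t ht hst => h2 s hs t ht hst)
    (fun _ _ => measurableSet_Ioc), ← h4, ENNReal.ofReal_sum_of_nonneg]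
  · simp
  · intro t ht; linarith [h1 t ht]

theorem kernel_int (x y : ℝ) (hy : 0 < y) (a b : ℝ) :
    ∫ u in a..b, (u - x) / ((u - x) ^ 2 + y ^ 2) =
      (1/2) * Real.log ((b - x) ^ 2 + y ^ 2) - (1/2) * Real.log ((a - x) ^ 2 + y ^ 2) := by
  have hpos : ∀ u : ℝ, (u - x) ^ 2 + y ^ 2 ≠ 0 := fun u => by positivity
  refine intervalIntegral.integral_eq_sub_of_hasDerivAt
    (f := fun u => (1/2) * Real.log ((u - x) ^ 2 + y ^ 2)) ?_ ?_
  · intro u _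
    have h := ((((hasDerivAt_id u).sub_const x).pow 2).add_const (y ^ 2)).log (hpos u)
    refine (h.const_mul (1/2)).congr_deriv ?_
    simp only [Pi.pow_apply, id]
    have := hpos u
    push_cast
    field_simp
    try ring
  · apply Continuous.intervalIntegrable
    apply Continuous.div (by fun_prop) (by fun_prop) hpos

theorem kernel_cont (x y : ℝ) (hy : 0 < y) :
    Continuous (fun u : ℝ => (u - x) / ((u - x) ^ 2 + y ^ 2)) := by
  have hpos : ∀ u : ℝ, (u - x) ^ 2 + y ^ 2 ≠ 0 := fun u => by positivity
  exact Continuous.div (by fun_prop) (by fun_prop) hpos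

theorem log_bound (T : Finset ℝ) (c : ℝ → ℝ) (hc : ∀ t ∈ T, 0 < c t) (x y : ℝ) (hy : 0 < y)
    (K : ℝ) (hK : 0 < K) (hKS : K ≤ ∑ t ∈ T, c t * (y / ((t - x) ^ 2 + y ^ 2))) :
    Real.log K ≤ ∫ u in {x | 1 + ∑ t ∈ T, c t / (t - x) < 0}, (u - x) / ((u - x) ^ 2 + y ^ 2) := by
  obtain ⟨a, h1, h2, h3, -, h5⟩ := F_main T c hc
  rw [setIntegral_congr_set h3, integral_biUnion_finset T (fun _ _ => measurableSet_Ioc)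
    (fun s hs t ht hst => h2 s hs t ht hst)
    (fun t ht => ((kernel_cont x y hy).integrableOn_Icc).mono_set Ioc_subset_Icc_self)]
  have : ∀ t ∈ T, ∫ u in Ioc t (a t), (u - x) / ((u - x) ^ 2 + y ^ 2) =
      (1/2) * Real.log ((a t - x) ^ 2 + y ^ 2) - (1/2) * Real.log ((t - x) ^ 2 + y ^ 2) := by
    intro t ht
    rw [← intervalIntegral.integral_of_le (h1 t ht).le, kernel_int x y hy]
  rw [Finset.sum_congr rfl this]
  set z : ℂ := ⟨x, y⟩ with hz
  have hnorm : ∀ t : ℝ, (1/2) * Real.log ((t - x) ^ 2 + y ^ 2) = Real.log ‖z - t‖ := by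
    intro t
    rw [Complex.norm_def, Real.log_sqrt (Complex.normSq_nonneg _), Complex.normSq_apply]
    simp [hz]
    ring_nf
  have hne : ∀ t : ℝ, z - t ≠ 0 := by
    intro t h
    have := congrArg Complex.im h
    simp [hz] at this
    linarith
  simp_rw [hnorm]
  rw [Finset.sum_sub_distrib, ← Real.log_prod (fun t _ => norm_ne_zero_iff.2 (hne _)),
    ← Real.log_prod (fun t _ => norm_ne_zero_iff.2 (hne _)), ← norm_prod, ← norm_prod]
  have hA : ∏ t ∈ T, (z - a t) ≠ 0 := Finset.prod_ne_zero_iff.2 fun t _ => hne _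
  have hB : ∏ t ∈ T, (z - t) ≠ 0 := Finset.prod_ne_zero_iff.2 fun t _ => hne _
  rw [← Real.log_div (norm_ne_zero_iff.2 hA) (norm_ne_zero_iff.2 hB), ← norm_div]
  apply Real.log_le_log hK
  have h6 := congrArg (fun p => Polynomial.aeval z p) h5
  simp only [map_sub, map_prod, map_sum, map_mul, Polynomial.aeval_X, Polynomial.aeval_C] at h6
  have h7 : (∏ t ∈ T, (z - a t)) / ∏ t ∈ T, (z - t) = 1 - ∑ t ∈ T, (c t : ℂ) / (z - t) := by
    rw [div_eq_iff hB, sub_mul, one_mul, Finset.sum_mul]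
    refine Eq.trans h6 ?_
    congr 1
    apply Finset.sum_congr rfl
    intro t ht
    rw [← Finset.mul_prod_erase T _ ht]
    have := hne t
    simp only [Complex.coe_algebraMap]
    field_simp
  rw [h7]
  refine le_trans ?_ (Complex.abs_im_le_norm _)
  refine le_trans ?_ (le_abs_self _)
  refine hKS.trans (le_of_eq ?_)
  simp only [Complex.sub_im, Complex.one_im, Complex.im_sum, zero_sub]
  rw [← Finset.sum_neg_distrib]
  apply Finset.sum_congr rfl
  intro t ht
  rw [Complex.div_im]
  simp [hz, Complex.normSq_apply]
  have : (t - x) ^ 2 + y ^ 2 ≠ 0 := by positivity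
  have : (x - t) * (x - t) + y * y = (t - x) ^ 2 + y ^ 2 := by ring
  rw [this]
  field_simp

theorem reindex (s : Finset ℕ) (t c : ℕ → ℝ) (hc : ∀ i, 0 ≤ c i) :
    ∃ (T : Finset ℝ) (c' : ℝ → ℝ), (∀ τ ∈ T, 0 < c' τ) ∧
      ∀ g : ℝ → ℝ, ∑ i ∈ s, c i * g (t i) = ∑ τ ∈ T, c' τ * g τ := by
  classical
  refine ⟨(s.filter (0 < c ·)).image t, fun τ => ∑ i ∈ (s.filter (0 < c ·)) with t i = τ, c i, ?_, ?_⟩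
  · intro τ hτ
    obtain ⟨i, hi, rfl⟩ := Finset.mem_image.1 hτ
    apply Finset.sum_pos
    · intro j hj
      simp at hj
      exact hj.1.2
    · exact ⟨i, by simp at hi ⊢; exact hi⟩
  · intro g
    have h1 : ∑ i ∈ s, c i * g (t i) = ∑ i ∈ s.filter (0 < c ·), c i * g (t i) := by
      symm
      apply Finset.sum_filter_of_ne
      intro i _ h
      exact lt_of_le_of_ne (hc i) (fun h0 => h (by rw [← h0, zero_mul]))
    rw [h1, ← Finset.sum_fiberwise_of_maps_to (fun i hi => Finset.mem_image_of_mem t hi)]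
    apply Finset.sum_congr rfl
    intro τ _
    rw [Finset.sum_mul]
    apply Finset.sum_congr rfl
    intro i hi
    rw [(Finset.mem_filter.1 hi).2]

theorem booleN (s : Finset ℕ) (t c : ℕ → ℝ) (hc : ∀ i, 0 ≤ c i) (l : ℝ) (hl : 0 < l) :
    volume {x | l + ∑ i ∈ s, c i / (t i - x) < 0} = ENNReal.ofReal ((∑ i ∈ s, c i) / l) := by
  obtain ⟨T, c', h1, h2⟩ := reindex s t (fun i => c i / l) (fun i => div_nonneg (hc i) hl.le)
  have h3 := h2 (fun _ => 1)
  simp only [mul_one] at h3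
  rw [Finset.sum_div, h3, ← boole T c' h1]
  congr 1
  ext x
  have h4 := h2 (fun τ => (τ - x)⁻¹)
  simp only [← div_eq_mul_inv] at h4
  simp only [mem_ofPred_eq]
  rw [← h4]
  have : l + ∑ i ∈ s, c i / (t i - x) = l * (1 + ∑ i ∈ s, c i / l / (t i - x)) := by
    rw [mul_add, mul_one, Finset.mul_sum]
    congr 1
    apply Finset.sum_congr rfl
    intro i _
    rw [div_right_comm]
    field_simp
  rw [this, mul_neg_iff]
  constructor
  · rintro (h | h)
    · exact h.2
    · linarith [h.1]
  · intro h; exact Or.inl ⟨hl, h⟩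

theorem logN (s : Finset ℕ) (t c : ℕ → ℝ) (hc : ∀ i, 0 ≤ c i) (x y : ℝ) (hy : 0 < y)
    (K : ℝ) (hK : 0 < K) (hKS : K ≤ ∑ i ∈ s, c i * (y / ((t i - x) ^ 2 + y ^ 2))) :
    Real.log K ≤ ∫ u in {x | 1 + ∑ i ∈ s, c i / (t i - x) < 0}, (u - x) / ((u - x) ^ 2 + y ^ 2) := by
  obtain ⟨T, c', h1, h2⟩ := reindex s t c hc
  have h3 := h2 (fun τ => y / ((τ - x) ^ 2 + y ^ 2))
  rw [h3] at hKS
  have h := log_bound T c' h1 x y hy K hK hKS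
  have h4 : ∀ x, ∑ i ∈ s, c i / (t i - x) = ∑ τ ∈ T, c' τ / (τ - x) := by
    intro x
    have := h2 (fun τ => (τ - x)⁻¹)
    simpa only [← div_eq_mul_inv] using this
  simpa only [h4] using h

theorem EN_meas (s : Finset ℕ) (t c : ℕ → ℝ) (l : ℝ) :
    MeasurableSet {x | l + ∑ i ∈ s, c i / (t i - x) < 0} := by
  apply measurableSet_lt _ measurable_const
  fun_prop

theorem EN_diff (t c : ℕ → ℝ) (hc : ∀ i, 0 ≤ c i) (n m : ℕ) (hnm : n ≤ m) (d : ℝ) (hd : 0 < d)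
    (hd1 : d < 1) :
    volume ({x | 1 + ∑ i ∈ Finset.range m, c i / (t i - x) < 0} \
      {x | 1 + ∑ i ∈ Finset.range n, c i / (t i - x) < 0}) ≤
    ENNReal.ofReal ((∑ i ∈ Finset.range n, c i) / (1 - d) - (∑ i ∈ Finset.range n, c i)) +
      ENNReal.ofReal ((∑ i ∈ Finset.Ico n m, c i) / d) := by
  have hsub : {x | 1 + ∑ i ∈ Finset.range n, c i / (t i - x) < 0} ⊆
      {x | (1 - d) + ∑ i ∈ Finset.range n, c i / (t i - x) < 0} := by
    intro x hx
    simp only [mem_ofPred_eq] at *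
    linarith
  have h1 : volume ({x | (1 - d) + ∑ i ∈ Finset.range n, c i / (t i - x) < 0} \
      {x | 1 + ∑ i ∈ Finset.range n, c i / (t i - x) < 0}) =
      ENNReal.ofReal ((∑ i ∈ Finset.range n, c i) / (1 - d) - (∑ i ∈ Finset.range n, c i)) := by
    rw [measure_sdiff hsub (EN_meas _ _ _ _).nullMeasurableSet, booleN _ _ _ hc _ (by linarith),
      booleN _ _ _ hc _ one_pos, div_one, ← ENNReal.ofReal_sub]
    · exact Finset.sum_nonneg fun i _ => hc i
    · rw [booleN _ _ _ hc _ one_pos]; exact ENNReal.ofReal_ne_top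
  rw [← h1, ← booleN _ t _ hc _ hd]
  refine le_trans (measure_mono ?_) (measure_union_le _ _)
  rintro x ⟨hx1, hx2⟩
  simp only [mem_ofPred_eq, mem_union, Set.mem_sdiff] at *
  rw [← Finset.sum_range_add_sum_Ico _ hnm] at hx1
  by_cases h : (1 - d) + ∑ i ∈ Finset.range n, c i / (t i - x) < 0
  · exact Or.inl ⟨h, hx2⟩
  · right; linarith

theorem EN_diff' (t c : ℕ → ℝ) (hc : ∀ i, 0 ≤ c i) (n m : ℕ) (hnm : n ≤ m) :
    volume ({x | 1 + ∑ i ∈ Finset.range n, c i / (t i - x) < 0} \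
      {x | 1 + ∑ i ∈ Finset.range m, c i / (t i - x) < 0}) ≤
    volume ({x | 1 + ∑ i ∈ Finset.range m, c i / (t i - x) < 0} \
      {x | 1 + ∑ i ∈ Finset.range n, c i / (t i - x) < 0}) := by
  have hn := booleN (Finset.range n) t c hc 1 one_pos
  have hm := booleN (Finset.range m) t c hc 1 one_pos
  have mn := EN_meas (Finset.range n) t c 1
  have mm := EN_meas (Finset.range m) t c 1
  set A := {x | 1 + ∑ i ∈ Finset.range n, c i / (t i - x) < 0}
  set B := {x | 1 + ∑ i ∈ Finset.range m, c i / (t i - x) < 0}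
  have hle : volume A ≤ volume B := by
    rw [hn, hm, div_one, div_one]
    apply ENNReal.ofReal_le_ofReal
    exact Finset.sum_le_sum_of_subset_of_nonneg (Finset.range_mono hnm) fun i _ _ => hc i
  rw [← measure_inter_add_sdiff A mm, ← measure_inter_add_sdiff B mn, inter_comm B A] at hle
  refine (ENNReal.add_le_add_iff_left ?_).1 hle
  refine ne_top_of_le_ne_top ?_ (measure_mono inter_subset_left)
  rw [hn]; exact ENNReal.ofReal_ne_top

theorem EN_cauchy (t c : ℕ → ℝ) (hc : ∀ i, 0 ≤ c i) (hs : Summable c) (η : ℝ) (hη : 0 < η) :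
    ∀ᶠ n in atTop, ∀ m ≥ n, volume ({x | 1 + ∑ i ∈ Finset.range m, c i / (t i - x) < 0} \
      {x | 1 + ∑ i ∈ Finset.range n, c i / (t i - x) < 0}) ≤ ENNReal.ofReal η := by
  set S := ∑' i, c i with hS
  have hS0 : 0 ≤ S := tsum_nonneg hc
  set d := min (1/2) (η / (4 * S + 4)) with hd
  have hd0 : 0 < d := lt_min (by norm_num) (by positivity)
  have hd1 : d ≤ 1/2 := min_le_left _ _
  have hd2 : d * (4 * S + 4) ≤ η := by
    rw [← le_div_iff₀ (by positivity)]; exact min_le_right _ _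
  have htail : ∀ᶠ n in atTop, S - d * η / 2 < ∑ i ∈ Finset.range n, c i :=
    hs.hasSum.tendsto_sum_nat.eventually (lt_mem_nhds (by
      have : 0 < d * η := by positivity
      linarith))
  filter_upwards [htail] with n hn m hm
  refine (EN_diff t c hc n m hm d hd0 (by linarith)).trans ?_
  have hCn0 : 0 ≤ ∑ i ∈ Finset.range n, c i := Finset.sum_nonneg fun i _ => hc i
  have hCn : ∑ i ∈ Finset.range n, c i ≤ S := hs.sum_le_tsum _ fun i _ => hc i
  have hCm : ∑ i ∈ Finset.range m, c i ≤ S := hs.sum_le_tsum _ fun i _ => hc i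
  rw [← Finset.sum_range_add_sum_Ico _ hm] at hCm
  have hI0 : 0 ≤ ∑ i ∈ Finset.Ico n m, c i := Finset.sum_nonneg fun i _ => hc i
  set Cn := ∑ i ∈ Finset.range n, c i
  set I := ∑ i ∈ Finset.Ico n m, c i
  have h1 : Cn / (1 - d) - Cn ≤ η / 2 := by
    rw [sub_le_iff_le_add, div_le_iff₀ (by linarith)]
    nlinarith
  have h2 : I / d ≤ η / 2 := by
    rw [div_le_iff₀ hd0]; nlinarith
  calc _ ≤ ENNReal.ofReal (η/2) + ENNReal.ofReal (η/2) := by gcongr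
    _ = ENNReal.ofReal η := by
      rw [← ENNReal.ofReal_add (by positivity) (by positivity)]; congr 1; ring

theorem limit_set (A : ℕ → Set ℝ) (hA : ∀ k, MeasurableSet (A k)) 
    (h1 : ∀ k, volume (A (k+1) \ A k) ≤ ENNReal.ofReal ((1/2)^k))
    (h2 : ∀ k, volume (A k \ A (k+1)) ≤ ENNReal.ofReal ((1/2)^k)) :
    ∃ E, MeasurableSet E ∧ Tendsto (fun k => volume (E \ A k)) atTop (𝓝 0) ∧
      Tendsto (fun k => volume (A k \ E)) atTop (𝓝 0) := by
  have hsum : ∑' k : ℕ, ENNReal.ofReal ((1/2:ℝ)^k) ≠ ⊤ := by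
    rw [← ENNReal.ofReal_tsum_of_nonneg (fun _ => by positivity) summable_geometric_two]
    exact ENNReal.ofReal_ne_top
  have ht := ENNReal.tendsto_sum_nat_add _ hsum
  refine ⟨⋂ k, ⋃ j, A (j + k), MeasurableSet.iInter fun k => MeasurableSet.iUnion fun j => hA _, ?_, ?_⟩
  · refine tendsto_of_tendsto_of_tendsto_of_le_of_le tendsto_const_nhds ht (fun _ => zero_le) ?_
    intro k
    refine le_trans (measure_mono (t := ⋃ j, (A (j + k + 1) \ A (j + k))) ?_) 
      ((measure_iUnion_le _).trans (ENNReal.tsum_le_tsum fun j => h1 _))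
    rintro x ⟨hx, hxk⟩
    obtain ⟨j, hj⟩ := mem_iUnion.1 (mem_iInter.1 hx k)
    by_contra hcon
    simp only [mem_iUnion, Set.mem_sdiff, not_exists, not_and, not_not] at hcon
    have : ∀ j, x ∉ A (j + k) := by
      intro j
      induction j with
      | zero => simpa using hxk
      | succ j ih => 
        intro h
        exact ih (hcon j (by rwa [add_right_comm] at h))
    exact this j hj
  · refine tendsto_of_tendsto_of_tendsto_of_le_of_le tendsto_const_nhds ht (fun _ => zero_le) ?_
    intro k
    refine le_trans (measure_mono (t := ⋃ j, (A (j + k) \ A (j + k + 1))) ?_) 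
      ((measure_iUnion_le _).trans (ENNReal.tsum_le_tsum fun j => h2 _))
    rintro x ⟨hxk, hx⟩
    by_contra hcon
    simp only [mem_iUnion, Set.mem_sdiff, not_exists, not_and, not_not] at hcon
    have : ∀ j, x ∈ A (j + k) := by
      intro j
      induction j with
      | zero => simpa using hxk
      | succ j ih => 
        have := hcon j ih
        rwa [add_right_comm]
    apply hx
    rw [mem_iInter]
    intro l
    rw [mem_iUnion]
    exact ⟨k, by rw [add_comm]; exact this l⟩

theorem setInt_close (A E : Set ℝ) (hA : MeasurableSet A) (hE : MeasurableSet E)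
    (hA' : volume A ≠ ⊤) (hE' : volume E ≠ ⊤) (g : ℝ → ℝ) (hg : Continuous g) (M : ℝ)
    (hM : ∀ u, ‖g u‖ ≤ M) :
    |(∫ u in A, g u) - ∫ u in E, g u| ≤ M * (volume (A \ E)).toReal + M * (volume (E \ A)).toReal := by
  have iA : IntegrableOn g A := Measure.integrableOn_of_bounded hA' hg.aestronglyMeasurable
    (Eventually.of_forall hM)
  have iE : IntegrableOn g E := Measure.integrableOn_of_bounded hE' hg.aestronglyMeasurable
    (Eventually.of_forall hM)
  rw [← integral_inter_add_sdiff hE iA, ← integral_inter_add_sdiff hA iE, inter_comm E A,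
    add_sub_add_left_eq_sub]
  refine (abs_sub _ _).trans ?_
  gcongr
  · exact norm_setIntegral_le_of_norm_le_const
      ((measure_mono sdiff_subset).trans_lt hA'.lt_top) (fun u _ => hM u)
  · exact norm_setIntegral_le_of_norm_le_const
      ((measure_mono sdiff_subset).trans_lt hE'.lt_top) (fun u _ => hM u)

theorem cover (e : Set ℝ) (he : volume e = 0) :
    ∃ t c r : ℕ → ℝ, (∀ i, 0 ≤ c i) ∧ Summable c ∧
      ∀ x ∈ e, ∀ N : ℝ, ∃ i, 0 < r i ∧ |t i - x| ≤ r i ∧ N * r i ≤ c i := by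
  have h := fun k : ℕ => Besicovitch.exists_closedBall_covering_tsum_measure_le (volume : Measure ℝ)
    (ε := ENNReal.ofReal ((1/4)^k)) (by simp) (fun _ => Ioi 0) e
    (fun x _ δ hδ => ⟨δ / 2, by simp; linarith, by simp; linarith, by linarith⟩)
  choose T r hcount hsub hr hcov hsum using h
  simp only [he, zero_add] at hsum
  have : ∀ k, Countable (T k) := fun k => (hcount k).to_subtype
  let _ : Encodable (Σ k, T k) := Encodable.ofCountable _
  let c0 : (Σ k, T k) → ℝ := fun p => 2 ^ p.1 * r p.1 p.2
  have hc0 : ∀ p, 0 ≤ c0 p := fun p =>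
    mul_nonneg (by positivity) (le_of_lt (hr p.1 p.2 p.2.2))
  have hinj : Function.Injective (Encodable.encode : (Σ k, T k) → ℕ) := Encodable.encode_injective
  have hs0 : Summable c0 := by
    have h1 : ∑' p, ENNReal.ofReal (c0 p) ≠ ⊤ := by
      rw [ENNReal.tsum_sigma']
      have h2 : ∀ k, ∑' x : T k, ENNReal.ofReal (c0 ⟨k, x⟩) ≤ ENNReal.ofReal ((1/2)^k) := by
        intro k
        calc ∑' x : T k, ENNReal.ofReal (c0 ⟨k, x⟩) 
            ≤ ∑' x : T k, ENNReal.ofReal (2^k) * volume (Metric.closedBall (x:ℝ) (r k x)) := by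
              apply ENNReal.tsum_le_tsum
              intro x
              rw [Real.volume_closedBall, ← ENNReal.ofReal_mul (by positivity)]
              apply ENNReal.ofReal_le_ofReal
              have : 0 < r k x := hr k x x.2
              simp only [c0]
              gcongr
              linarith
          _ ≤ ENNReal.ofReal (2^k) * ENNReal.ofReal ((1/4)^k) := by
              rw [ENNReal.tsum_mul_left]
              gcongr
              exact hsum k
          _ = ENNReal.ofReal ((1/2)^k) := by
              rw [← ENNReal.ofReal_mul (by positivity), ← mul_pow]
              norm_num
      refine ne_top_of_le_ne_top ?_ (ENNReal.tsum_le_tsum h2)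
      rw [← ENNReal.ofReal_tsum_of_nonneg (fun _ => by positivity) summable_geometric_two]
      exact ENNReal.ofReal_ne_top
    have h3 := ENNReal.summable_toReal h1
    refine h3.congr fun p => ?_
    rw [ENNReal.toReal_ofReal (hc0 p)]
  refine ⟨Function.extend Encodable.encode (fun p : (Σ k, T k) => (p.2 : ℝ)) 0,
    Function.extend Encodable.encode c0 0,
    Function.extend Encodable.encode (fun p : (Σ k, T k) => r p.1 p.2) 0, ?_, ?_, ?_⟩
  · intro i
    by_cases hi : ∃ p : (Σ k, T k), Encodable.encode p = i
    · obtain ⟨p, rfl⟩ := hi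
      rw [hinj.extend_apply]; exact hc0 p
    · rw [Function.extend_apply' _ _ _ hi]; simp
  · exact (summable_extend_zero hinj).2 hs0
  · intro x hx N
    obtain ⟨k, hk⟩ := pow_unbounded_of_one_lt N (one_lt_two (α := ℝ))
    obtain ⟨τ, hτ, hxτ⟩ := mem_iUnion₂.1 (hcov k hx)
    refine ⟨Encodable.encode (⟨k, ⟨τ, hτ⟩⟩ : Σ k, T k), ?_⟩
    rw [hinj.extend_apply, hinj.extend_apply, hinj.extend_apply]
    have hr' : 0 < r k τ := hr k τ hτ
    refine ⟨hr', ?_, ?_⟩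
    · rw [Metric.mem_closedBall, dist_comm, Real.dist_eq] at hxτ
      exact hxτ
    · simp only [c0]
      gcongr

theorem poisson_int (x y : ℝ) (hy : 0 < y) :
    Integrable (fun u : ℝ => y / ((u - x) ^ 2 + y ^ 2)) ∧
      ∫ u : ℝ, y / ((u - x) ^ 2 + y ^ 2) = π := by
  have h : (fun u : ℝ => y / ((u - x) ^ 2 + y ^ 2)) =
      fun u => y⁻¹ * (fun v => (fun w : ℝ => (1 + w ^ 2)⁻¹) (v / y)) (u - x) := by
    ext u
    have : (u - x) ^ 2 + y ^ 2 ≠ 0 := by positivity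
    have : 1 + ((u - x) / y) ^ 2 ≠ 0 := by positivity
    field_simp
    ring
  constructor
  · rw [h]
    exact ((integrable_inv_one_add_sq.comp_div hy.ne').comp_sub_right x).const_mul _
  · rw [h, integral_const_mul, integral_sub_right_eq_self (fun v => (fun w : ℝ => (1 + w ^ 2)⁻¹) (v / y)),
      Measure.integral_comp_div (fun w : ℝ => (1 + w ^ 2)⁻¹) y, integral_univ_inv_one_add_sq, abs_of_pos hy, smul_eq_mul]
    field_simp

theorem kernel_bound (x y : ℝ) (hy : 0 < y) (u : ℝ) :
    ‖(u - x) / ((u - x) ^ 2 + y ^ 2)‖ ≤ 1 / y := by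
  rw [Real.norm_eq_abs, abs_div, abs_of_pos (show 0 < (u - x) ^ 2 + y ^ 2 by positivity),
    div_le_div_iff₀ (by positivity) hy]
  nlinarith [sq_abs (u - x), sq_nonneg (|u - x| - y), abs_nonneg (u - x)]

theorem compare (E : Set ℝ) (hE : MeasurableSet E) (hE' : volume E ≠ ⊤) (x y : ℝ) (hy : 0 < y) :
    (∫ u in E, (u - x) / ((u - x) ^ 2 + y ^ 2)) - π ≤
      |∫ t in {t : ℝ | y < |t - x|}, E.indicator 1 t / (x - t)| := by
  set S := {t : ℝ | y < |t - x|} with hSdef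
  have hS : MeasurableSet S := measurableSet_lt measurable_const (by fun_prop)
  have hrew : ∫ t in S, E.indicator 1 t / (x - t) = ∫ t in E, S.indicator (fun t => 1 / (x - t)) t := by
    rw [← integral_indicator hS, ← integral_indicator hE]
    congr 1
    ext t
    by_cases h1 : t ∈ S <;> by_cases h2 : t ∈ E <;> simp [h1, h2]
  rw [hrew]
  have i1 : IntegrableOn (fun u => (u - x) / ((u - x) ^ 2 + y ^ 2)) E :=
    Measure.integrableOn_of_bounded hE' (kernel_cont x y hy).aestronglyMeasurable
      (Eventually.of_forall (kernel_bound x y hy))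
  have i2 : IntegrableOn (S.indicator (fun t => 1 / (x - t))) E := by
    refine Measure.integrableOn_of_bounded (M := 1 / y) hE' ?_ (Eventually.of_forall ?_)
    · apply Measurable.aestronglyMeasurable
      apply Measurable.indicator _ hS
      fun_prop
    · intro t
      by_cases h : t ∈ S
      · rw [indicator_of_mem h, Real.norm_eq_abs, abs_div, abs_one, abs_sub_comm]
        exact one_div_le_one_div_of_le hy (le_of_lt h)
      · rw [indicator_of_notMem h, norm_zero]; positivity
  obtain ⟨p1, p2⟩ := poisson_int x y hy
  have hsum : (∫ u in E, (u - x) / ((u - x) ^ 2 + y ^ 2)) +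
      ∫ t in E, S.indicator (fun t => 1 / (x - t)) t ≤ π := by
    rw [← integral_add i1 i2]
    calc _ ≤ ∫ u in E, y / ((u - x) ^ 2 + y ^ 2) := by
          apply integral_mono (i1.add i2) p1.integrableOn
          intro u
          have hp : 0 < (u - x) ^ 2 + y ^ 2 := by positivity
          by_cases h : u ∈ S
          · simp only [Pi.add_apply, indicator_of_mem h]
            have h' : y < |u - x| := h
            have hne : u - x ≠ 0 := by
              intro h0; rw [h0, abs_zero] at h'; linarith
            have : x - u = -(u - x) := by ring
            rw [this]
            have heq : (u - x) / ((u - x) ^ 2 + y ^ 2) + 1 / -(u - x) =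
              (-y / (u - x)) * (y / ((u - x) ^ 2 + y ^ 2)) := by
              field_simp
              ring
            rw [heq]
            have hle : -y / (u - x) ≤ 1 := by
              refine (le_abs_self _).trans ?_
              rw [abs_div, abs_neg, abs_of_pos hy, div_le_one (by positivity)]
              exact h'.le
            have : 0 ≤ y / ((u - x) ^ 2 + y ^ 2) := by positivity
            nlinarith
          · simp only [Pi.add_apply, indicator_of_notMem h, add_zero]
            have h' : |u - x| ≤ y := not_lt.1 h
            gcongr
            exact (le_abs_self _).trans h'
      _ ≤ ∫ u, y / ((u - x) ^ 2 + y ^ 2) :=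
          setIntegral_le_integral p1 (Eventually.of_forall fun u => by positivity)
      _ = π := p2
  have := neg_abs_le (∫ t in E, S.indicator (fun t => 1 / (x - t)) t)
  linarith

/-- Theorem 1: For every null set `e ⊂ ℝ` there is a measurable
set `E` of finite measure such that the maximal Hilbert transform
`H*𝟙_E(x) = sup_{ε>0} |H_ε 𝟙_E(x)|` is infinite at every `x ∈ e`. -/
theorem stmt9 (e : Set ℝ) (he : volume e = 0) :
    ∃ E : Set ℝ, MeasurableSet E ∧ volume E < ⊤ ∧
      ∀ x ∈ e,
        (⨆ (ε : ℝ) (_ : 0 < ε),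
          ENNReal.ofReal
            |(1 / π) * ∫ t in {t : ℝ | ε < |t - x|}, E.indicator 1 t / (x - t)|)
          = ⊤ := by
  obtain ⟨t, c, r, hc, hs, hcov⟩ := cover e he
  obtain ⟨φ, hφ, hφc⟩ := extraction_forall_of_eventually
    (fun k : ℕ => EN_cauchy t c hc hs ((1/2)^k) (by positivity))
  have hφ' := fun k => (EN_diff' t c hc (φ k) (φ (k+1)) (hφ (Nat.lt_succ_self k)).le)
  have hφ1 := fun k => hφc k (φ (k+1)) (hφ (Nat.lt_succ_self k)).le
  have hvol := fun k => booleN (Finset.range (φ k)) t c hc 1 one_pos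
  have hmeas := fun k => EN_meas (Finset.range (φ k)) t c 1
  have hlog := fun k => logN (Finset.range (φ k)) t c hc
  set A : ℕ → Set ℝ := fun k => {x | 1 + ∑ i ∈ Finset.range (φ k), c i / (t i - x) < 0} with hA
  obtain ⟨E, hE, hlim1, hlim2⟩ := limit_set A hmeas hφ1 (fun k => (hφ' k).trans (hφ1 k))
  have hAtop : ∀ k, volume (A k) ≠ ⊤ := fun k => by
    rw [show volume (A k) = _ from hvol k]; exact ENNReal.ofReal_ne_top
  have hEtop : volume E ≠ ⊤ := by
    obtain ⟨k, hk⟩ := (hlim1.eventually (gt_mem_nhds (show (0:ENNReal) < 1 by simp))).exists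
    have : volume E ≤ volume (A k) + volume (E \ A k) := by
      refine le_trans (measure_mono ?_) (measure_union_le _ _)
      intro x hx
      by_cases h : x ∈ A k
      · exact Or.inl h
      · exact Or.inr ⟨hx, h⟩
    exact ne_top_of_le_ne_top (ENNReal.add_ne_top.2 ⟨hAtop k, (hk.trans ENNReal.one_lt_top).ne⟩) this
  refine ⟨E, hE, hEtop.lt_top, ?_⟩
  intro x hx
  apply ENNReal.eq_top_of_forall_nnreal_le
  intro M
  set K := Real.exp (π * M + π) with hKdef
  have hK : 0 < K := Real.exp_pos _
  obtain ⟨i, hri, hti, hci⟩ := hcov x hx (2 * K)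
  set y := r i with hy
  have hterm : K ≤ c i * (y / ((t i - x) ^ 2 + y ^ 2)) := by
    have hsq : (t i - x) ^ 2 ≤ y ^ 2 := sq_le_sq' (by linarith [neg_abs_le (t i - x)]) ((le_abs_self _).trans hti)
    have hp : 0 < (t i - x) ^ 2 + y ^ 2 := by positivity
    rw [← mul_div_assoc, le_div_iff₀ hp]
    nlinarith
  have hint : ∀ᶠ k in atTop, π * M + π ≤ ∫ u in A k, (u - x) / ((u - x) ^ 2 + y ^ 2) := by
    filter_upwards [eventually_gt_atTop i] with k hk
    have := hlog k x y hri K hK (hterm.trans (Finset.single_le_sum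
      (f := fun i => c i * (y / ((t i - x) ^ 2 + y ^ 2)))
      (fun j _ => mul_nonneg (hc j) (by positivity)) (Finset.mem_range.2 (hk.trans_le (hφ.id_le k)))))
    rwa [hKdef, Real.log_exp] at this
  have hconv : Tendsto (fun k => ∫ u in A k, (u - x) / ((u - x) ^ 2 + y ^ 2)) atTop
      (𝓝 (∫ u in E, (u - x) / ((u - x) ^ 2 + y ^ 2))) := by
    rw [tendsto_iff_dist_tendsto_zero]
    have hz : Tendsto (fun k => 1 / y * (volume (A k \ E)).toReal + 1 / y * (volume (E \ A k)).toReal)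
        atTop (𝓝 (1 / y * (0:ENNReal).toReal + 1 / y * (0:ENNReal).toReal)) :=
      (((ENNReal.tendsto_toReal ENNReal.zero_ne_top).comp hlim2).const_mul _).add
        (((ENNReal.tendsto_toReal ENNReal.zero_ne_top).comp hlim1).const_mul _)
    simp only [ENNReal.toReal_zero, mul_zero, add_zero] at hz
    refine squeeze_zero (fun _ => dist_nonneg) (fun k => ?_) hz
    rw [Real.dist_eq]
    exact setInt_close (A k) E (hmeas k) hE (hAtop k) hEtop _ (kernel_cont x y hri) (1 / y)
      (kernel_bound x y hri)
  have hfin : π * M + π ≤ ∫ u in E, (u - x) / ((u - x) ^ 2 + y ^ 2) := ge_of_tendsto hconv hint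
  have hcmp := compare E hE hEtop x y hri
  refine le_trans ?_ (le_iSup₂_of_le y hri le_rfl)
  rw [← ENNReal.ofReal_coe_nnreal]
  apply ENNReal.ofReal_le_ofReal
  rw [abs_mul, abs_of_pos (by positivity), one_div, ← div_eq_inv_mul, le_div_iff₀ pi_pos]
  linarith
end

section
/- For every closed set e ⊂ ℝ of Lebesgue measure zero, there exists a continuous function f ∈ C(ℝ) ∩ L¹(ℝ) such that the maximal Hilbert transform H*f(x) = sup_{ε>0} |H_ε f(x)| is infinite for every x ∈ e. -/
open MeasureTheory Filter Set Real

/-- The (unnormalised) truncated Hilbert transform. -/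
noncomputable def trH (f : ℝ → ℝ) (ε x : ℝ) : ℝ := ∫ t in {t : ℝ | ε < |t - x|}, f t / (x - t)

lemma trH_meas (ε x : ℝ) : MeasurableSet {t : ℝ | ε < |t - x|} :=
  measurableSet_lt measurable_const (by fun_prop)

lemma trH_bound (f : ℝ → ℝ) {ε : ℝ} (hε : 0 < ε) (x t : ℝ) (ht : ε < |t - x|) :
    ‖f t / (x - t)‖ ≤ ε⁻¹ * ‖f t‖ := by
  rw [norm_div, div_eq_mul_inv, mul_comm]
  have : ε ≤ ‖x - t‖ := by rw [Real.norm_eq_abs, abs_sub_comm]; exact ht.le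
  gcongr

lemma trH_integrable {f : ℝ → ℝ} (hf : Integrable f) {ε : ℝ} (hε : 0 < ε) (x : ℝ) :
    IntegrableOn (fun t => f t / (x - t)) {t : ℝ | ε < |t - x|} := by
  refine Integrable.mono' (g := fun t => ε⁻¹ * ‖f t‖) (hf.norm.const_mul _).integrableOn ?_ ?_
  · exact (hf.aestronglyMeasurable.aemeasurable.div (by fun_prop)).aestronglyMeasurable.restrict
  · filter_upwards [ae_restrict_mem (trH_meas ε x)] with t ht
    exact trH_bound f hε x t ht

lemma trH_norm_le {f : ℝ → ℝ} (hf : Integrable f) {ε : ℝ} (hε : 0 < ε) (x : ℝ) :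
    (∫ t in {t : ℝ | ε < |t - x|}, ‖f t / (x - t)‖) ≤ ε⁻¹ * ∫ t, |f t| := by
  calc _ ≤ ∫ t in {t : ℝ | ε < |t - x|}, ε⁻¹ * ‖f t‖ := by
        refine setIntegral_mono_on (trH_integrable hf hε x).norm (hf.norm.const_mul _).integrableOn
          (trH_meas ε x) ?_
        intro t ht
        exact trH_bound f hε x t ht
    _ ≤ ∫ t, ε⁻¹ * ‖f t‖ := by
        refine setIntegral_le_integral (hf.norm.const_mul _) (Eventually.of_forall fun t => ?_)
        simp only [Pi.zero_apply]; positivity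
    _ = _ := by rw [integral_const_mul]; rfl

lemma trH_le {f : ℝ → ℝ} (hf : Integrable f) {ε : ℝ} (hε : 0 < ε) (x : ℝ) :
    |trH f ε x| ≤ ε⁻¹ * ∫ t, |f t| :=
  (norm_integral_le_integral_norm _).trans (trH_norm_le hf hε x)

lemma trH_split {f : ℝ → ℝ} (hc : Continuous f) (hf : Integrable f) {ε R : ℝ} (hε : 0 < ε)
    (hR : ε ≤ R) (x : ℝ) :
    trH f ε x = trH f R x - ∫ r in ε..R, (f (x + r) - f (x - r)) / r := by
  have hint := trH_integrable hf hε x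
  have hset : {t : ℝ | ε < |t - x|} =
      {t : ℝ | R < |t - x|} ∪ (Ioc (x + ε) (x + R) ∪ Ico (x - R) (x - ε)) := by
    ext t
    simp only [Set.mem_ofPred_eq, mem_union, mem_Ioc, mem_Ico, lt_abs]
    constructor
    · rintro (h | h)
      · by_cases h2 : t ≤ x + R
        · right; left; constructor <;> linarith
        · left; left; linarith
      · by_cases h2 : x - R ≤ t
        · right; right; constructor <;> linarith
        · left; right; linarith
    · rintro ((h | h) | ⟨h, h'⟩ | ⟨h, h'⟩)
      · left; linarith
      · right; linarith
      · left; linarith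
      · right; linarith
  have hd1 : Disjoint {t : ℝ | R < |t - x|} (Ioc (x + ε) (x + R) ∪ Ico (x - R) (x - ε)) := by
    rw [Set.disjoint_left]
    rintro t ht ht'
    simp only [Set.mem_ofPred_eq, mem_union, mem_Ioc, mem_Ico, lt_abs] at ht ht'
    rcases ht with h | h <;> rcases ht' with ⟨h1, h2⟩ | ⟨h1, h2⟩ <;> linarith
  have hd2 : Disjoint (Ioc (x + ε) (x + R)) (Ico (x - R) (x - ε)) := by
    rw [Set.disjoint_left]
    rintro t ⟨h1, h2⟩ ⟨h3, h4⟩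
    linarith
  have hc1 : ContinuousOn (fun r => f (x + r) / r) (uIcc ε R) := by
    rw [uIcc_of_le hR]
    exact (by fun_prop : Continuous fun r => f (x + r)).continuousOn.div continuousOn_id
      (fun r hr => (hε.trans_le hr.1).ne')
  have hc2 : ContinuousOn (fun r => f (x - r) / r) (uIcc ε R) := by
    rw [uIcc_of_le hR]
    exact (by fun_prop : Continuous fun r => f (x - r)).continuousOn.div continuousOn_id
      (fun r hr => (hε.trans_le hr.1).ne')
  unfold trH
  rw [hset] at hint ⊢
  rw [setIntegral_union hd1 (measurableSet_Ioc.union measurableSet_Ico)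
    (hint.mono_set subset_union_left) (hint.mono_set subset_union_right),
    setIntegral_union hd2 measurableSet_Ico
    (hint.mono_set (subset_union_left.trans subset_union_right))
    (hint.mono_set (subset_union_right.trans subset_union_right))]
  rw [← integral_Icc_eq_integral_Ico, integral_Icc_eq_integral_Ioc,
    ← intervalIntegral.integral_of_le (by linarith), ← intervalIntegral.integral_of_le (by linarith)]
  rw [← intervalIntegral.integral_comp_add_left (fun t => f t / (x - t)) x,
    ← intervalIntegral.integral_comp_sub_left (fun t => f t / (x - t)) x]
  simp_rw [sub_div]
  rw [intervalIntegral.integral_sub hc1.intervalIntegrable hc2.intervalIntegrable]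
  have : ∀ r, f (x + r) / (x - (x + r)) = - (f (x + r) / r) := by
    intro r; rw [sub_add_cancel_left, div_neg]
  simp_rw [this, sub_sub_cancel]
  rw [intervalIntegral.integral_neg]
  ring

lemma trH_lip {f : ℝ → ℝ} {L : NNReal} (hl : LipschitzWith L f) (hf : Integrable f) (x : ℝ) :
    ∃ B : ℝ, ∀ ε > 0, |trH f ε x| ≤ B := by
  refine ⟨(∫ t, |f t|) + 2 * L, fun ε hε => ?_⟩
  have hI : 0 ≤ ∫ t, |f t| := integral_nonneg fun t => abs_nonneg _
  have hL : (0:ℝ) ≤ L := L.2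
  by_cases h : 1 ≤ ε
  · have := trH_le hf hε x
    have h2 : ε⁻¹ ≤ 1 := inv_le_one_of_one_le₀ h
    nlinarith
  · push Not at h
    rw [trH_split hl.continuous hf hε h.le]
    have h1 := trH_le hf one_pos x
    have h2 : ‖∫ r in ε..1, (f (x + r) - f (x - r)) / r‖ ≤ 2 * L * |1 - ε| := by
      refine intervalIntegral.norm_integral_le_of_norm_le_const fun r hr => ?_
      rw [uIoc_of_le h.le] at hr
      have hr0 : 0 < r := hε.trans hr.1
      have := hl.dist_le_mul (x + r) (x - r)
      rw [Real.dist_eq, Real.dist_eq, show x + r - (x - r) = 2 * r by ring,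
        abs_of_pos (by positivity : 0 < 2 * r)] at this
      rw [norm_div, Real.norm_eq_abs, Real.norm_eq_abs, abs_of_pos hr0, div_le_iff₀ hr0]
      linarith
    have h3 : |1 - ε| ≤ 1 := by rw [abs_le]; constructor <;> linarith
    rw [Real.norm_eq_abs] at h2
    have := abs_sub (trH f 1 x) (∫ r in ε..1, (f (x + r) - f (x - r)) / r)
    rw [inv_one, one_mul] at h1
    nlinarith

lemma contour {F : ℂ → ℂ} (hF : ∀ z : ℂ, 0 ≤ z.im → DifferentiableAt ℂ F z) {ε R : ℝ}
    (hε : 0 < ε) (hR : ε ≤ R) (x : ℝ) :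
    (∫ r in ε..R, ((F ((x + r : ℝ))).im - (F ((x - r : ℝ))).im) / r) =
      (∫ θ in (0:ℝ)..π, (F (x + ε * Complex.exp (θ * Complex.I))).re) -
      ∫ θ in (0:ℝ)..π, (F (x + R * Complex.exp (θ * Complex.I))).re := by
  have hR0 : 0 < R := hε.trans_le hR
  have hFr : Continuous fun t : ℝ => F (t : ℂ) :=
    continuous_iff_continuousAt.2 fun t =>
      ((hF t (by simp)).continuousAt).comp Complex.continuous_ofReal.continuousAt
  have hcirc : ∀ ρ : ℝ, 0 ≤ ρ → ContinuousOn (fun θ : ℝ => F (x + ρ * Complex.exp (θ * Complex.I)))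
      (uIcc 0 π) := by
    intro ρ hρ θ hθ
    rw [uIcc_of_le pi_pos.le] at hθ
    apply ContinuousAt.continuousWithinAt
    refine ContinuousAt.comp (f := fun θ : ℝ => (x + ρ * Complex.exp (θ * Complex.I) : ℂ)) (g := F)
      ?_ (by fun_prop)
    refine (hF _ ?_).continuousAt
    simp [Complex.exp_im]
    exact mul_nonneg hρ (sin_nonneg_of_nonneg_of_le_pi hθ.1 hθ.2)
  have key := Complex.integral_boundary_rect_eq_zero_of_differentiableOn
    (fun w => F (x + Complex.exp w)) (Real.log ε) (Real.log R + π * Complex.I) (by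
      intro w hw
      simp only [Complex.mem_reProdIm, Complex.ofReal_re, Complex.ofReal_im, Complex.add_im,
        Complex.mul_im, Complex.I_im, Complex.I_re] at hw
      have h2 := hw.2
      simp only [mul_one, mul_zero, add_zero, zero_add] at h2
      rw [uIcc_of_le pi_pos.le] at h2
      apply DifferentiableAt.differentiableWithinAt
      refine DifferentiableAt.comp (f := fun w => (x + Complex.exp w : ℂ)) (g := F) w ?_
        (by fun_prop)
      refine hF _ ?_
      simp [Complex.exp_im]
      exact mul_nonneg (Real.exp_pos _).le (sin_nonneg_of_nonneg_of_le_pi h2.1 h2.2))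
  simp only [Complex.ofReal_re, Complex.ofReal_im, Complex.add_im, Complex.add_re, Complex.mul_re,
        Complex.mul_im, Complex.I_im, Complex.I_re, mul_one, mul_zero, add_zero, zero_add, sub_zero,
        Complex.ofReal_zero, zero_mul, Complex.exp_add, Complex.exp_pi_mul_I, mul_neg,
        ← Complex.ofReal_exp, Real.exp_log hε, Real.exp_log hR0] at key
  have e1 : (∫ r in ε..R, ((F ((x + r : ℝ))).im - (F ((x - r : ℝ))).im) / r) =
      ∫ u in (Real.log ε)..(Real.log R), ((F ((x + Real.exp u : ℝ))).im - (F ((x - Real.exp u : ℝ))).im) := by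
    have := intervalIntegral.integral_comp_mul_deriv' (a := Real.log ε) (b := Real.log R)
      (f := Real.exp) (f' := Real.exp)
      (g := fun r => ((F ((x + r : ℝ))).im - (F ((x - r : ℝ))).im) / r)
      (fun u _ => Real.hasDerivAt_exp u) Real.continuous_exp.continuousOn (by
        refine ContinuousOn.div ?_ continuousOn_id ?_
        · apply Continuous.continuousOn
          exact (Complex.continuous_im.comp (hFr.comp (by fun_prop : Continuous fun r : ℝ => x + r))).sub
            (Complex.continuous_im.comp (hFr.comp (by fun_prop : Continuous fun r : ℝ => x - r)))
        · rintro _ ⟨u, _, rfl⟩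
          exact (Real.exp_pos u).ne')
    rw [Real.exp_log hε, Real.exp_log hR0] at this
    rw [← this]
    refine intervalIntegral.integral_congr fun u _ => ?_
    simp only [Function.comp]
    rw [div_mul_cancel₀ _ (Real.exp_pos u).ne']
  have hc1 : Continuous fun u : ℝ => F ((x + Real.exp u : ℝ)) :=
    hFr.comp (by fun_prop : Continuous fun r : ℝ => x + Real.exp r)
  have hc2 : Continuous fun u : ℝ => F ((x - Real.exp u : ℝ)) :=
    hFr.comp (by fun_prop : Continuous fun r : ℝ => x - Real.exp r)
  have imI : ∀ (g : ℝ → ℂ) (a b : ℝ), ContinuousOn g (uIcc a b) →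
      (∫ u in a..b, g u).im = ∫ u in a..b, (g u).im := fun g a b hg =>
    (Complex.imCLM.intervalIntegral_comp_comm hg.intervalIntegrable).symm
  have reI : ∀ (g : ℝ → ℂ) (a b : ℝ), ContinuousOn g (uIcc a b) →
      (∫ u in a..b, g u).re = ∫ u in a..b, (g u).re := fun g a b hg =>
    (Complex.reCLM.intervalIntegral_comp_comm hg.intervalIntegrable).symm
  have k2 := congrArg Complex.im key
  have hc1' := hc1.continuousOn (s := uIcc (Real.log ε) (Real.log R))
  have hc2' := hc2.continuousOn (s := uIcc (Real.log ε) (Real.log R))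
  have hcR := hcirc R hR0.le
  have hcε := hcirc ε hε.le
  rw [e1, intervalIntegral.integral_sub, ← imI _ _ _ hc1', ← imI _ _ _ hc2', ← reI _ _ _ hcR,
    ← reI _ _ _ hcε]
  · simp only [Complex.add_im, Complex.sub_im, smul_eq_mul, Complex.mul_im, Complex.I_re,
      Complex.I_im, zero_mul, one_mul, zero_add, Complex.zero_im] at k2
    push_cast at k2 ⊢
    simp only [sub_eq_add_neg] at k2 ⊢
    linarith
  · exact (Complex.continuous_im.comp hc1).intervalIntegrable _ _
  · exact (Complex.continuous_im.comp hc2).intervalIntegrable _ _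

lemma grid {E : Set ℝ} (hE : IsCompact E) (h0 : volume E = 0) {s : ℝ} (hs : 0 < s) :
    ∃ δ : ℝ, 0 < δ ∧ δ ≤ 1/2 ∧ ∃ J : Finset ℝ, (J.card : ℝ) * δ ≤ s ∧
      (∀ a ∈ J, ∃ x ∈ E, |x - a| ≤ δ) ∧ ∀ x ∈ E, ∃ a ∈ J, |x - a| ≤ δ := by
  have ht := tendsto_measure_cthickening_of_isCompact (μ := volume) hE
  rw [h0] at ht
  have hev := (ht.mono_left (nhdsWithin_le_nhds (s := Ioi 0))).eventually
    (gt_mem_nhds (ENNReal.ofReal_pos.2 hs))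
  obtain ⟨δ, ⟨hδs, hδ2⟩, hδ⟩ := ((hev.and (nhdsWithin_le_nhds
    (gt_mem_nhds (show (0:ℝ) < 1/2 by norm_num)))).and self_mem_nhdsWithin).exists
  have hδ : 0 < δ := hδ
  set A : Set ℤ := (fun x : ℝ => ⌊x / δ⌋) '' E with hA
  have hmem : ∀ x : ℝ, x ∈ Ico ((⌊x / δ⌋ : ℝ) * δ) ((⌊x / δ⌋ + 1 : ℝ) * δ) := by
    intro x
    constructor
    · rw [← le_div_iff₀ hδ]; exact Int.floor_le _
    · rw [← div_lt_iff₀ hδ]; exact Int.lt_floor_add_one _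
  have hAfin : A.Finite := by
    obtain ⟨M, hM⟩ := hE.isBounded.exists_norm_le
    refine (Set.finite_Icc (⌊-M / δ⌋) (⌊M / δ⌋)).subset ?_
    rintro _ ⟨x, hx, rfl⟩
    have := abs_le.1 (hM x hx)
    constructor <;> apply Int.floor_le_floor <;> gcongr <;> linarith
  have hcard : ((hAfin.toFinset.card : ℝ)) * δ ≤ s := by
    have h1 : volume (⋃ j ∈ hAfin.toFinset, Ico ((j : ℝ) * δ) ((j + 1 : ℝ) * δ)) =
        ∑ j ∈ hAfin.toFinset, ENNReal.ofReal δ := by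
      rw [measure_biUnion_finset]
      · refine Finset.sum_congr rfl fun j _ => ?_
        rw [Real.volume_Ico]; congr 1; ring
      · intro i _ j _ hij
        refine Set.disjoint_left.2 fun t hi hj => hij ?_
        have e : ∀ k : ℤ, t ∈ Ico ((k : ℝ) * δ) ((k + 1 : ℝ) * δ) → ⌊t / δ⌋ = k := by
          intro k hk
          rw [Int.floor_eq_iff, le_div_iff₀ hδ, div_lt_iff₀ hδ]
          exact hk
        rw [← e i hi, ← e j hj]
      · exact fun _ _ => measurableSet_Ico
    have h2 : (⋃ j ∈ hAfin.toFinset, Ico ((j : ℝ) * δ) ((j + 1 : ℝ) * δ)) ⊆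
        Metric.cthickening δ E := by
      intro t ht
      simp only [mem_iUnion, Set.Finite.mem_toFinset] at ht
      obtain ⟨j, ⟨x, hx, rfl⟩, htj⟩ := ht
      refine Metric.mem_cthickening_of_dist_le t x δ E hx ?_
      have hx' := hmem x
      simp only [mem_Ico] at hx' htj
      rw [Real.dist_eq, abs_le]
      constructor <;> linarith
    have h3 := (measure_mono h2).trans hδs.le
    rw [h1, Finset.sum_const, nsmul_eq_mul, ← ENNReal.ofReal_natCast,
      ← ENNReal.ofReal_mul (by positivity)] at h3
    exact (ENNReal.ofReal_le_ofReal_iff hs.le).1 h3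
  refine ⟨δ, hδ, hδ2.le, hAfin.toFinset.image (fun j : ℤ => (j : ℝ) * δ), ?_, ?_, ?_⟩
  · refine le_trans ?_ hcard
    gcongr
    exact Finset.card_image_le
  · intro a ha
    simp only [Finset.mem_image, Set.Finite.mem_toFinset] at ha
    obtain ⟨_, ⟨x, hx, rfl⟩, rfl⟩ := ha
    refine ⟨x, hx, ?_⟩
    have := hmem x
    simp only [mem_Ico] at this
    rw [abs_le]; constructor <;> linarith
  · intro x hx
    refine ⟨(⌊x / δ⌋ : ℝ) * δ, ?_, ?_⟩
    · simp only [Finset.mem_image, Set.Finite.mem_toFinset]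
      exact ⟨_, ⟨x, hx, rfl⟩, rfl⟩
    · have := hmem x
      simp only [mem_Ico] at this
      rw [abs_le]; constructor <;> linarith

/-- A finite sum of simple poles in the lower half plane. -/
noncomputable def polG (K δ : ℝ) (J : Finset ℝ) (z : ℂ) : ℂ :=
  ((K * δ : ℝ) : ℂ) * ∑ a ∈ J, Complex.I / (z - (a : ℂ) + δ * Complex.I)

lemma pol_re (w : ℂ) : (Complex.I / w).re = w.im / Complex.normSq w := by
  simp [Complex.div_re]

lemma pol_im (a δ : ℝ) (z : ℂ) : (z - (a : ℂ) + δ * Complex.I).im = z.im + δ := by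
  simp

lemma pol_re' (a δ : ℝ) (z : ℂ) : (z - (a : ℂ) + δ * Complex.I).re = z.re - a := by
  simp

lemma pol_nonneg (a δ : ℝ) (hδ : 0 < δ) (z : ℂ) (hz : 0 ≤ z.im) :
    0 ≤ (Complex.I / (z - (a : ℂ) + δ * Complex.I)).re := by
  rw [pol_re, pol_im]
  exact div_nonneg (by linarith) (Complex.normSq_nonneg _)

lemma pol_ne (a δ : ℝ) (hδ : 0 < δ) (z : ℂ) (hz : 0 ≤ z.im) :
    (z - (a : ℂ) + δ * Complex.I) ≠ 0 := by
  intro h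
  have := congrArg Complex.im h
  rw [pol_im] at this
  simp at this; linarith

lemma polG_re (K δ : ℝ) (J : Finset ℝ) (z : ℂ) : (polG K δ J z).re =
    K * δ * ∑ a ∈ J, (Complex.I / (z - (a : ℂ) + δ * Complex.I)).re := by
  rw [polG, Complex.re_ofReal_mul, Complex.re_sum]

lemma polG_nonneg {K δ : ℝ} (hK : 0 ≤ K) (hδ : 0 < δ) (J : Finset ℝ) (z : ℂ) (hz : 0 ≤ z.im) :
    0 ≤ (polG K δ J z).re := by
  rw [polG_re]
  exact mul_nonneg (by positivity) (Finset.sum_nonneg fun a _ => pol_nonneg a δ hδ z hz)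

lemma polG_slit {K δ : ℝ} (hK : 0 ≤ K) (hδ : 0 < δ) (J : Finset ℝ) (z : ℂ) (hz : 0 ≤ z.im) :
    1 + polG K δ J z ∈ Complex.slitPlane := by
  left
  have := polG_nonneg hK hδ J z hz
  simp only [Complex.add_re, Complex.one_re]; linarith

lemma polG_large {K δ : ℝ} (hK : 0 ≤ K) (hδ : 0 < δ) (J : Finset ℝ) (z : ℂ) (hz : 0 ≤ z.im)
    (hz2 : z.im ≤ δ) (a : ℝ) (ha : a ∈ J) (hza : |z.re - a| ≤ 2 * δ) :
    K / 8 ≤ (polG K δ J z).re := by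
  rw [polG_re]
  have h1 := Finset.single_le_sum (f := fun a : ℝ => (Complex.I / (z - (a : ℂ) + δ * Complex.I)).re)
    (fun a _ => pol_nonneg a δ hδ z hz) ha
  have h2 : 1 / (8 * δ) ≤ (Complex.I / (z - (a : ℂ) + δ * Complex.I)).re := by
    rw [pol_re, Complex.normSq_apply, pol_im, pol_re']
    have h3 : (z.re - a) * (z.re - a) ≤ 4 * δ * δ := by
      have := abs_le.1 hza
      nlinarith
    rw [div_le_div_iff₀ (by positivity) (by nlinarith [mul_self_nonneg (z.re - a)])]
    nlinarith
  calc K / 8 = K * δ * (1 / (8 * δ)) := by field_simp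
    _ ≤ _ := by
      refine mul_le_mul_of_nonneg_left (h2.trans h1) (by positivity)

lemma polG_small {K δ : ℝ} (hK : 0 ≤ K) (hδ : 0 < δ) (J : Finset ℝ) (hJ : K * (J.card * δ) ≤ 1)
    (z : ℂ) (hz : ∀ a ∈ J, 1 ≤ ‖z - (a : ℂ) + δ * Complex.I‖) :
    ‖polG K δ J z‖ ≤ 1 := by
  rw [polG, norm_mul, Complex.norm_real, Real.norm_of_nonneg (by positivity)]
  have : ‖∑ a ∈ J, Complex.I / (z - (a : ℂ) + δ * Complex.I)‖ ≤ ∑ a ∈ J, (1:ℝ) := by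
    refine norm_sum_le_of_le _ fun a ha => ?_
    rw [norm_div, Complex.norm_I]
    exact div_le_one_of_le₀ (hz a ha) (norm_nonneg _)
  rw [Finset.sum_const, nsmul_eq_mul, mul_one] at this
  calc _ ≤ K * δ * J.card := by gcongr
    _ ≤ 1 := by linarith

lemma polG_contDiffAt {K δ : ℝ} (hδ : 0 < δ) (J : Finset ℝ) (z : ℂ) (hz : 0 ≤ z.im) :
    ContDiffAt ℂ 1 (polG K δ J) z := by
  unfold polG
  refine contDiffAt_const.mul (ContDiffAt.sum fun a _ => ?_)
  exact contDiffAt_const.div (by fun_prop) (pol_ne a δ hδ z hz)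

lemma block {E : Set ℝ} (hE : IsCompact E) (h0 : volume E = 0) (k : ℝ) (hk : 0 ≤ k)
    (hEk : ∀ x ∈ E, |x| ≤ k) {c : ℝ} (hc : 0 < c) :
    ∃ f : ℝ → ℝ, (∃ L, LipschitzWith L f) ∧ Integrable f ∧ (∀ t, |f t| ≤ c) ∧ (∫ t, |f t|) ≤ c ∧
      (∀ x ∈ E, ∀ ε > 0, trH f ε x ≤ c) ∧
      (∀ x ∈ E, ∃ ε₀ > 0, ∀ ε, 0 < ε → ε ≤ ε₀ → trH f ε x ≤ -1) := by
  set N : ℝ := 4 * k + 4 with hN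
  set R : ℝ := 2 * k + 3 with hRdef
  obtain ⟨η, hη, hηc⟩ : ∃ η : ℝ, 0 < η ∧ η * π * (2 * N + 4) = c :=
    by
    have hN4 : 0 < 2 * N + 4 := by positivity
    refine ⟨c / (π * (2 * N + 4)), by positivity, ?_⟩
    have := hN4.ne'
    field_simp
  obtain ⟨K, hK, hKl⟩ : ∃ K : ℝ, 0 < K ∧ 1 + c ≤ π * (η * Real.log (1 + K / 8)) := by
    refine ⟨8 * Real.exp ((1 + c) / (π * η)), by positivity, ?_⟩
    have : (1 + c) / (π * η) ≤ Real.log (1 + 8 * Real.exp ((1 + c) / (π * η)) / 8) := by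
      rw [Real.le_log_iff_exp_le (by positivity)]
      linarith
    rw [div_le_iff₀ (by positivity)] at this
    linarith
  obtain ⟨δ, hδ, hδ2, J, hJ, hJE, hEJ⟩ := grid hE h0 (inv_pos.2 hK)
  have hJ' : K * (J.card * δ) ≤ 1 := by
    calc K * (J.card * δ) ≤ K * K⁻¹ := by gcongr
      _ = 1 := mul_inv_cancel₀ hK.ne'
  set F : ℂ → ℂ := fun z => (η : ℂ) * Complex.log (1 + polG K δ J z) with hFdef
  have hFc : ∀ z : ℂ, 0 ≤ z.im → ContDiffAt ℂ 1 F z := by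
    intro z hz
    refine contDiffAt_const.mul ?_
    exact ContDiffAt.comp z (Complex.contDiffAt_log (polG_slit hK.le hδ J z hz))
      (contDiffAt_const.add (polG_contDiffAt hδ J z hz))
  have hFd : ∀ z : ℂ, 0 ≤ z.im → DifferentiableAt ℂ F z :=
    fun z hz => (hFc z hz).differentiableAt (by simp)
  have hFre : ∀ z, (F z).re = η * Real.log ‖1 + polG K δ J z‖ := by
    intro z; rw [hFdef]; simp only [Complex.re_ofReal_mul, Complex.log_re]
  have hFre_lb : ∀ z : ℂ, 0 ≤ z.im → ∀ b, 0 ≤ b → b ≤ (polG K δ J z).re →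
      η * Real.log (1 + b) ≤ (F z).re := by
    intro z hz b hb hb'
    rw [hFre]
    have : 1 + b ≤ ‖1 + polG K δ J z‖ := by
      refine le_trans ?_ (Complex.re_le_norm _)
      simp only [Complex.add_re, Complex.one_re]; linarith
    gcongr
  have hFre_nn : ∀ z : ℂ, 0 ≤ z.im → 0 ≤ (F z).re := by
    intro z hz
    simpa using hFre_lb z hz 0 le_rfl (polG_nonneg hK.le hδ J z hz)
  have hFim : ∀ z, |(F z).im| ≤ η * π := by
    intro z; rw [hFdef]; simp only [Complex.im_ofReal_mul, Complex.log_im]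
    rw [abs_mul, abs_of_pos hη]
    gcongr
    exact Complex.abs_arg_le_pi _
  let φ : ContDiffBump (0 : ℝ) := ⟨N, N + 1, by positivity, by linarith⟩
  have hφ1 : ∀ t, |t| ≤ N → φ t = 1 := fun t ht =>
    φ.one_of_mem_closedBall (by simpa [φ] using ht)
  have hφsupp : Function.support φ = Ioo (-(N + 1)) (N + 1) := by
    rw [φ.support_eq, Real.ball_eq_Ioo]; simp [φ]
  set f : ℝ → ℝ := fun t => φ t * (F t).im with hf
  have hfb : ∀ t, |f t| ≤ η * π := by
    intro t
    rw [hf]; simp only [abs_mul]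
    have h1 : |φ t| ≤ 1 := by rw [abs_of_nonneg φ.nonneg]; exact φ.le_one
    have := hFim t
    have := abs_nonneg (F t).im
    nlinarith [abs_nonneg (φ t)]
  have hfcd : ContDiff ℝ 1 f := by
    refine φ.contDiff.mul ?_
    rw [contDiff_iff_contDiffAt]
    intro t
    have h1 : ContDiffAt ℝ 1 F (t : ℂ) := (hFc t (by simp)).restrict_scalars ℝ
    have h2 : ContDiffAt ℝ 1 (fun t : ℝ => F (t : ℂ)) t :=
      ContDiffAt.comp (g := F) (f := fun t : ℝ => (t : ℂ)) t h1 Complex.ofRealCLM.contDiff.contDiffAt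
    exact Complex.imCLM.contDiff.contDiffAt.comp t h2
  have hfs : HasCompactSupport f := φ.hasCompactSupport.mul_right
  have hfi : Integrable f := hfcd.continuous.integrable_of_hasCompactSupport hfs
  have hfl1 : (∫ t, |f t|) ≤ η * π * (2 * N + 2) := by
    have hz : ∀ t, t ∉ Icc (-(N+1)) (N+1) → |f t| = 0 := by
      intro t ht
      have : t ∉ Function.support φ := by
        rw [hφsupp]; exact fun h => ht (Ioo_subset_Icc_self h)
      rw [hf]; simp only [Function.notMem_support.1 this, zero_mul, abs_zero]
    rw [← setIntegral_eq_integral_of_forall_compl_eq_zero hz]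
    calc (∫ t in Icc (-(N+1)) (N+1), |f t|) ≤ ∫ t in Icc (-(N+1)) (N+1), η * π := by
          refine setIntegral_mono_on hfi.abs.integrableOn ?_ measurableSet_Icc fun t _ => hfb t
          exact integrableOn_const (by simp)
      _ = _ := by
          rw [setIntegral_const, Measure.real, Real.volume_Icc, ENNReal.toReal_ofReal (by linarith),
            smul_eq_mul]
          ring
  have hηπ : 0 < η * π := by positivity
  have hR1 : 1 ≤ R := by linarith
  have hI0 : 0 ≤ ∫ t, |f t| := integral_nonneg fun t => abs_nonneg _
  have htail : ∀ x, ∀ ε, 1 ≤ ε → trH f ε x ≤ η * π * (2 * N + 2) := by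
    intro x ε hε
    have h1 := trH_le hfi (by linarith : 0 < ε) x
    have h2 : ε⁻¹ ≤ 1 := inv_le_one_of_one_le₀ hε
    have h3 := le_abs_self (trH f ε x)
    nlinarith
  have himz : ∀ (x ρ θ : ℝ), 0 ≤ ρ → θ ∈ Icc 0 π →
      0 ≤ ((x : ℂ) + ρ * Complex.exp (θ * Complex.I)).im := by
    intro x ρ θ hρ hθ
    simp [Complex.exp_im]
    exact mul_nonneg hρ (sin_nonneg_of_nonneg_of_le_pi hθ.1 hθ.2)
  have hcirc : ∀ (x ρ : ℝ), 0 ≤ ρ → ContinuousOn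
      (fun θ : ℝ => (F (x + ρ * Complex.exp (θ * Complex.I))).re) (uIcc 0 π) := by
    intro x ρ hρ θ hθ
    rw [uIcc_of_le pi_pos.le] at hθ
    apply ContinuousAt.continuousWithinAt
    refine Complex.continuous_re.continuousAt.comp
      (f := fun θ : ℝ => F (x + ρ * Complex.exp (θ * Complex.I))) ?_
    refine ContinuousAt.comp (f := fun θ : ℝ => (x + ρ * Complex.exp (θ * Complex.I) : ℂ)) (g := F)
      ?_ (by fun_prop)
    exact (hFd _ (himz x ρ θ hρ hθ)).continuousAt
  have hlb : ∀ x ρ b : ℝ, 0 ≤ ρ → (∀ θ ∈ Icc 0 π, b ≤ (F (x + ρ * Complex.exp (θ * Complex.I))).re) →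
      π * b ≤ ∫ θ in (0:ℝ)..π, (F (x + ρ * Complex.exp (θ * Complex.I))).re := by
    intro x ρ b hρ h
    have := intervalIntegral.integral_mono_on (μ := volume) pi_pos.le (intervalIntegrable_const (c := b))
      (hcirc x ρ hρ).intervalIntegrable h
    simpa using this
  have hub : ∀ x ∈ E, (∫ θ in (0:ℝ)..π, (F (x + R * Complex.exp (θ * Complex.I))).re) ≤ π * η := by
    intro x hx
    have := intervalIntegral.integral_mono_on (μ := volume) (g := fun _ => η) pi_pos.le
      (hcirc x R (by linarith)).intervalIntegrable
      (intervalIntegrable_const (c := η)) ?_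
    · simpa using this
    intro θ hθ
    rw [hFre]
    have hG : ‖polG K δ J (x + R * Complex.exp (θ * Complex.I))‖ ≤ 1 := by
      refine polG_small hK.le hδ J hJ' _ fun a ha => ?_
      obtain ⟨y, hy, hya⟩ := hJE a ha
      have e1 : ‖(R : ℂ) * Complex.exp (θ * Complex.I)‖ = R := by
        rw [norm_mul, Complex.norm_exp_ofReal_mul_I, Complex.norm_real, Real.norm_of_nonneg (by linarith), mul_one]
      have e2 : ‖((x - a : ℝ) : ℂ) + δ * Complex.I‖ ≤ 2 * k + 1 := by
        refine (norm_add_le _ _).trans ?_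
        rw [Complex.norm_real, norm_mul, Complex.norm_I, Complex.norm_real, Real.norm_of_nonneg hδ.le,
          Real.norm_eq_abs]
        have h1 := hEk x hx
        have h2 := hEk y hy
        have h3 : |x - a| ≤ 2 * k + 1/2 := by
          rw [abs_le] at *
          constructor <;> linarith
        linarith
      have e3 := norm_sub_le_norm_add ((R : ℂ) * Complex.exp (θ * Complex.I)) (((x - a : ℝ) : ℂ) + δ * Complex.I)
      have e4 : (x : ℂ) + R * Complex.exp (θ * Complex.I) - a + δ * Complex.I =
        (R : ℂ) * Complex.exp (θ * Complex.I) + (((x - a : ℝ) : ℂ) + δ * Complex.I) := by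
        push_cast; ring
      rw [e4]
      linarith
    have h2 : ‖1 + polG K δ J (x + R * Complex.exp (θ * Complex.I))‖ ≤ 2 := by
      refine (norm_add_le _ _).trans ?_
      rw [norm_one]; linarith
    have h3 := Real.log_le_sub_one_of_pos (norm_pos_iff.2 (Complex.slitPlane_ne_zero
      (polG_slit hK.le hδ J _ (himz x R θ (by linarith) hθ))))
    nlinarith
  have hmain : ∀ x ∈ E, ∀ ε, 0 < ε → ε ≤ R → trH f ε x ≤ c -
      ∫ θ in (0:ℝ)..π, (F (x + ε * Complex.exp (θ * Complex.I))).re := by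
    intro x hx ε hε hεR
    rw [trH_split hfcd.continuous hfi hε hεR]
    have h1 : (∫ r in ε..R, (f (x + r) - f (x - r)) / r) =
        ∫ r in ε..R, ((F ((x + r : ℝ))).im - (F ((x - r : ℝ))).im) / r := by
      refine intervalIntegral.integral_congr fun r hr => ?_
      rw [uIcc_of_le hεR] at hr
      have h1 := abs_le.1 (hEk x hx)
      have h2 : 0 < r := hε.trans_le hr.1
      have h3 := hr.2
      have e1 : φ (x + r) = 1 := hφ1 _ (by rw [abs_le]; constructor <;> linarith)
      have e2 : φ (x - r) = 1 := hφ1 _ (by rw [abs_le]; constructor <;> linarith)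
      simp only [hf, e1, e2, one_mul]
    rw [h1, contour hFd hε hεR x]
    have h2 := htail x R hR1
    have h3 := hub x hx
    nlinarith
  refine ⟨f, ContDiff.lipschitzWith_of_hasCompactSupport hfs hfcd one_ne_zero, hfi, ?_, ?_, ?_, ?_⟩
  · intro t
    refine (hfb t).trans ?_
    nlinarith
  · nlinarith
  · intro x hx ε hε
    rcases le_total ε R with h | h
    · have h1 := hmain x hx ε hε h
      have h2 := hlb x ε 0 hε.le fun θ hθ => hFre_nn _ (himz x ε θ hε.le hθ)
      linarith
    · have := htail x ε (hR1.trans h)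
      nlinarith
  · intro x hx
    refine ⟨δ, hδ, fun ε hε hεδ => ?_⟩
    obtain ⟨a, ha, hxa⟩ := hEJ x hx
    have h1 := hmain x hx ε hε (by linarith)
    have h2 := hlb x ε (η * Real.log (1 + K / 8)) hε.le fun θ hθ => by
      refine hFre_lb _ (himz x ε θ hε.le hθ) _ (by positivity) ?_
      refine polG_large hK.le hδ J _ (himz x ε θ hε.le hθ) ?_ a ha ?_
      · simp [Complex.exp_im]
        nlinarith [Real.sin_le_one θ]
      · simp [Complex.exp_re]
        have c1 := Real.cos_le_one θ
        have c2 := Real.neg_one_le_cos θ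
        rw [abs_le] at hxa ⊢
        constructor <;> nlinarith
    linarith

theorem stmt10 (e : Set ℝ) (hclosed : IsClosed e) (he : volume e = 0) :
    ∃ f : ℝ → ℝ, Continuous f ∧ Integrable f ∧
      ∀ x ∈ e,
        (⨆ (ε : ℝ) (_ : 0 < ε),
          ENNReal.ofReal
            |(1 / π) * ∫ t in {t : ℝ | ε < |t - x|}, f t / (x - t)|)
          = ⊤ := by
  have hb : ∀ k : ℕ, ∃ f : ℝ → ℝ, (∃ L, LipschitzWith L f) ∧ Integrable f ∧
      (∀ t, |f t| ≤ (1/2 : ℝ)^k) ∧ (∫ t, |f t|) ≤ (1/2 : ℝ)^k ∧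
      (∀ x ∈ e ∩ Icc (-k : ℝ) k, ∀ ε > 0, trH f ε x ≤ (1/2 : ℝ)^k) ∧
      (∀ x ∈ e ∩ Icc (-k : ℝ) k, ∃ ε₀ > 0, ∀ ε, 0 < ε → ε ≤ ε₀ → trH f ε x ≤ -1) := by
    intro k
    exact block (isCompact_Icc.inter_left hclosed) (measure_mono_null inter_subset_left he) k
      (by positivity) (fun x hx => abs_le.2 hx.2) (by positivity)
  choose g hlip hint hsup hL1 hle hneg using hb
  have hsum : Summable fun k : ℕ => (1/2 : ℝ)^k := summable_geometric_two
  have hcont : ∀ k, Continuous (g k) := fun k => (hlip k).choose_spec.continuous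
  have hs : ∀ t, Summable fun k => g k t := fun t =>
    Summable.of_norm_bounded hsum fun k => hsup k t
  have hsn : Summable fun k => ∫ t, ‖g k t‖ :=
    Summable.of_nonneg_of_le (fun k => integral_nonneg fun t => norm_nonneg _) hL1 hsum
  refine ⟨fun t => ∑' k, g k t, continuous_tsum hcont hsum fun k t => hsup k t, ?_, ?_⟩
  · refine ⟨(continuous_tsum hcont hsum fun k t => hsup k t).aestronglyMeasurable, ?_⟩
    rw [hasFiniteIntegral_iff_enorm]
    calc (∫⁻ t, ‖∑' k, g k t‖ₑ) ≤ ∫⁻ t, ∑' k, ‖g k t‖ₑ :=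
          lintegral_mono fun t => enorm_tsum_le_tsum_enorm
      _ = ∑' k, ∫⁻ t, ‖g k t‖ₑ := lintegral_tsum fun k => (hcont k).enorm.aemeasurable
      _ = ∑' k, ENNReal.ofReal (∫ t, ‖g k t‖) := by
          simp_rw [ofReal_integral_norm_eq_lintegral_enorm (hint _)]
      _ < ⊤ := hsn.tsum_ofReal_lt_top
  intro x hx
  have hS : ∀ ε > 0, HasSum (fun k => trH (g k) ε x)
      (∫ t in {t : ℝ | ε < |t - x|}, (∑' k, g k t) / (x - t)) := by
    intro ε hε
    have := hasSum_integral_of_summable_integral_norm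
      (μ := volume.restrict {t : ℝ | ε < |t - x|}) (F := fun k t => g k t / (x - t))
      (fun k => trH_integrable (hint k) hε x)
      (Summable.of_nonneg_of_le (fun k => integral_nonneg fun t => norm_nonneg _)
        (fun k => trH_norm_le (hint k) hε x) (hsn.mul_left _))
    simp only [tsum_div_const] at this
    exact this
  obtain ⟨m, hm⟩ := exists_nat_ge |x|
  have hxk : ∀ k, m ≤ k → x ∈ e ∩ Icc (-k : ℝ) k := by
    intro k hk
    have : (m : ℝ) ≤ k := by exact_mod_cast hk
    exact ⟨hx, abs_le.1 (hm.trans this)⟩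
  have hB : ∀ k, ∃ B : ℝ, ∀ ε > 0, |trH (g k) ε x| ≤ B := fun k =>
    trH_lip (hlip k).choose_spec (hint k) x
  choose B hB using hB
  refine ENNReal.eq_top_of_forall_nnreal_le fun r => ?_
  obtain ⟨M, hM⟩ := exists_nat_ge (π * r + ∑ k ∈ Finset.range m, B k + 2)
  have hε0 : ∀ n : ℕ, ∃ ε₀ > 0, ∀ k, m ≤ k → k < m + n → ∀ ε, 0 < ε → ε ≤ ε₀ →
      trH (g k) ε x ≤ -1 := by
    intro n
    induction n with
    | zero => exact ⟨1, one_pos, fun k h1 h2 => by omega⟩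
    | succ n ih =>
      obtain ⟨ε₁, h1, h1'⟩ := ih
      obtain ⟨ε₂, h2, h2'⟩ := hneg (m + n) x (hxk _ (by omega))
      refine ⟨min ε₁ ε₂, lt_min h1 h2, fun k hk hk' ε hε hε' => ?_⟩
      rcases Nat.lt_or_ge k (m + n) with h | h
      · exact h1' k hk h ε hε (hε'.trans (min_le_left _ _))
      · obtain rfl : k = m + n := by omega
        exact h2' ε hε (hε'.trans (min_le_right _ _))
  obtain ⟨ε, hε, hεk⟩ := hε0 M
  have hub : (∫ t in {t : ℝ | ε < |t - x|}, (∑' k, g k t) / (x - t)) ≤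
      ∑ k ∈ Finset.range m, B k - M + 2 := by
    have hSε := hS ε hε
    have h1 := hSε.summable.sum_add_tsum_nat_add (m + M)
    rw [hSε.tsum_eq] at h1
    rw [← h1, Finset.sum_range_add]
    have a1 : ∑ k ∈ Finset.range m, trH (g k) ε x ≤ ∑ k ∈ Finset.range m, B k :=
      Finset.sum_le_sum fun k _ => (le_abs_self _).trans (hB k ε hε)
    have a2 : ∑ k ∈ Finset.range M, trH (g (m + k)) ε x ≤ ∑ k ∈ Finset.range M, (-1 : ℝ) :=
      Finset.sum_le_sum fun k hk => hεk _ (by omega) (by simpa using hk) ε hε le_rfl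
    have a3 : ∑' k, trH (g (k + (m + M))) ε x ≤ ∑' k : ℕ, (1/2 : ℝ)^k := by
      refine Summable.tsum_le_tsum (fun k => ?_) ((summable_nat_add_iff (m + M)).2 hSε.summable) hsum
      refine (hle _ x (hxk _ (by omega)) ε hε).trans ?_
      exact pow_le_pow_of_le_one (by norm_num) (by norm_num) (by omega)
    rw [tsum_geometric_two] at a3
    simp at a2
    linarith
  refine le_trans ?_ (le_iSup₂ (f := fun (ε : ℝ) (_ : 0 < ε) => ENNReal.ofReal
            |(1 / π) * ∫ t in {t : ℝ | ε < |t - x|}, (∑' k, g k t) / (x - t)|) ε hε)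
  rw [← ENNReal.ofReal_coe_nnreal]
  refine ENNReal.ofReal_le_ofReal ?_
  rw [abs_mul, abs_of_pos (by positivity), one_div, inv_mul_eq_div, le_div_iff₀ pi_pos]
  refine le_trans ?_ (neg_le_abs _)
  linarith
end
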